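/- arXiv:1902.10627 — 4 statements merged into one kernel-verified Lean document; each statement's English description precedes it below -/
import Mathlib

section
/- Let V be a complex vector superspace and D ⊆ V a sub superspace, with D^⊥ = {v̄ ∈ V* : v̄(w) = 0 for all w ∈ D}. Then the left W_V-module F_V(D) = W_V / (Σ_{∂ ∈ D^⊥} W_V ∂ + Σ_{v ∈ D} W_V v) is a simple W_V-module, and it carries a ℤ-grading and a ℤ/2-grading inherited from W_V. Moreover, if D and D' are sub superspaces of V whose even parts satisfy D_0 ≠ D'_0, then F_V(D) and F_V(D') are not isomorphic as W_V-modules. -/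
/-!
The creation operators of `F_V(D)` come from graded complements of `D` and `D^⊥`, the annihilation
operators from `D` and `D^⊥`. The supercommutation relations let an annihilator pass a creator at
the cost of a scalar, so annihilators lower the number of creators applied to the vacuum. Finitely
many creators admit an Euler operator `N = ∑ aᵢ yᵢ`, which acts on a monomial in them by its number
of factors; hence only multiples of the vacuum are killed by all annihilators, and applying
annihilators to any nonzero vector until all of them vanish leads back to the vacuum. That the
vacuum is not zero is seen on the model `S(X) ⊗ Λ(X)`, where creators multiply and annihilators
differentiate or contract.

The gradings are eigenspace decompositions of the automorphisms of `W_V` that scale `V` and `V*` by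
`2` and `1/2`, or that act by the parity.

An isomorphism from `F_V(D)` to `F_V(D')` would pull the vacuum of the latter back to a nonzero
vector killed by `D'`, whereas an even vector outside `D` acts injectively on `F_V(D)`: some
even annihilator has nonzero commutator with it and acts locally nilpotently.
-/

set_option synthInstance.maxHeartbeats 1000000
set_option maxHeartbeats 1000000

/-!
STATEMENT 0 (Lemma 2.2 of the paper): let `V` be a complex vector superspace (`V = V₀ ⊕ V₁`)
and `D ⊆ V` a sub superspace, with `D^⊥ = {v̄ ∈ V* : v̄(w) = 0 ∀ w ∈ D}`.  Then the left
`W_V`-module (the mixed Fock space)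
`F_V(D) = W_V / (Σ_{∂ ∈ D^⊥} W_V ∂ + Σ_{v ∈ D} W_V v)`
is simple, and it inherits a `ℤ`-grading and a `ℤ/2`-grading from `W_V`.  Moreover if
`D, D'` are sub superspaces with different even parts `D₀ ≠ D'₀` then `F_V(D) ≇ F_V(D')`
as `W_V`-modules.

Here the Weyl superalgebra `W_V = T(V ⊕ V*)/J` is the quotient of the tensor algebra by
the two-sided ideal generated by
`v⊗w - (-1)^{[v][w]} w⊗v`, `v̄⊗w̄ - (-1)^{[v̄][w̄]} w̄⊗v̄`,
`v̄⊗w - (-1)^{[v̄][w]} w⊗v̄ - v̄(w)·1`, for homogeneous `v, w ∈ V`, `v̄, w̄ ∈ V*`.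
It is `ℤ`-graded with `deg V = 1`, `deg V* = -1`, and `ℤ/2`-graded by the parities.
The inherited gradings on `F_V(D)` are characterized by: the vacuum `[1]` has degree `0`
(resp. parity `0`), and the generators act with their degree (resp. parity).
-/

noncomputable section

/-- The sign `(-1)^ε` for `ε : ℤ/2`. -/
def sgn (ε : ZMod 2) : ℂ := if ε = 0 then 1 else -1

variable (Vs : Type) [AddCommGroup Vs] [Module ℂ Vs]

/-- The parity-`ε` subspace of `V = V₀ ⊕ V₁`. -/
def par (V0 V1 : Submodule ℂ Vs) (ε : ZMod 2) : Submodule ℂ Vs :=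
  if ε = 0 then V0 else V1

/-- The parity-`ε` subspace of the dual superspace `V*`: the functionals vanishing on the
opposite-parity part of `V`. -/
def dpar (V0 V1 : Submodule ℂ Vs) (ε : ZMod 2) : Submodule ℂ (Module.Dual ℂ Vs) :=
  (par Vs V0 V1 (ε + 1)).dualAnnihilator

/-- `v ∈ V` as an element of the tensor algebra `T(V ⊕ V*)`. -/
def ιV (v : Vs) : TensorAlgebra ℂ (Vs × Module.Dual ℂ Vs) :=
  TensorAlgebra.ι ℂ (v, 0)

/-- `v̄ ∈ V*` as an element of the tensor algebra `T(V ⊕ V*)`. -/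
def ιF (φ : Module.Dual ℂ Vs) : TensorAlgebra ℂ (Vs × Module.Dual ℂ Vs) :=
  TensorAlgebra.ι ℂ (0, φ)

/-- The defining relations of the Weyl superalgebra `W_V` over the superspace
`V = V₀ ⊕ V₁`. -/
inductive WeylSupRel (V0 V1 : Submodule ℂ Vs) :
    TensorAlgebra ℂ (Vs × Module.Dual ℂ Vs) →
      TensorAlgebra ℂ (Vs × Module.Dual ℂ Vs) → Prop
  | vw (ε η : ZMod 2) (v w : Vs) (hv : v ∈ par Vs V0 V1 ε) (hw : w ∈ par Vs V0 V1 η) :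
      WeylSupRel V0 V1 (ιV Vs v * ιV Vs w) (sgn (ε * η) • (ιV Vs w * ιV Vs v))
  | fg (ε η : ZMod 2) (φ ψ : Module.Dual ℂ Vs)
      (hφ : φ ∈ dpar Vs V0 V1 ε) (hψ : ψ ∈ dpar Vs V0 V1 η) :
      WeylSupRel V0 V1 (ιF Vs φ * ιF Vs ψ) (sgn (ε * η) • (ιF Vs ψ * ιF Vs φ))
  | fv (ε η : ZMod 2) (φ : Module.Dual ℂ Vs) (v : Vs)
      (hφ : φ ∈ dpar Vs V0 V1 ε) (hv : v ∈ par Vs V0 V1 η) :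
      WeylSupRel V0 V1 (ιF Vs φ * ιV Vs v)
        (sgn (ε * η) • (ιV Vs v * ιF Vs φ) +
          algebraMap ℂ (TensorAlgebra ℂ (Vs × Module.Dual ℂ Vs)) (φ v))

/-- The Weyl superalgebra `W_V = T(V ⊕ V*)/J`. -/
abbrev WeylSup (V0 V1 : Submodule ℂ Vs) : Type _ := RingQuot (WeylSupRel Vs V0 V1)

/-- The canonical image of `v ∈ V` in `W_V`. -/
def wV (V0 V1 : Submodule ℂ Vs) (v : Vs) : WeylSup Vs V0 V1 :=
  RingQuot.mkAlgHom ℂ (WeylSupRel Vs V0 V1) (ιV Vs v)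

/-- The canonical image of `v̄ ∈ V*` in `W_V`. -/
def wF (V0 V1 : Submodule ℂ Vs) (φ : Module.Dual ℂ Vs) : WeylSup Vs V0 V1 :=
  RingQuot.mkAlgHom ℂ (WeylSupRel Vs V0 V1) (ιF Vs φ)

/-- The left ideal `J(D) = Σ_{∂ ∈ D^⊥} W_V ∂ + Σ_{v ∈ D} W_V v` of `W_V`. -/
def idealJ (V0 V1 : Submodule ℂ Vs) (D : Submodule ℂ Vs) :
    Submodule (WeylSup Vs V0 V1) (WeylSup Vs V0 V1) :=
  Submodule.span (WeylSup Vs V0 V1)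
    ((wV Vs V0 V1) '' D ∪ (wF Vs V0 V1) '' D.dualAnnihilator)

/-- The mixed Fock space `F_V(D) = W_V/J(D)`, a left `W_V`-module. -/
abbrev FockSup (V0 V1 : Submodule ℂ Vs) (D : Submodule ℂ Vs) : Type _ :=
  WeylSup Vs V0 V1 ⧸ idealJ Vs V0 V1 D

section SimplicityCriterion

variable {K W F : Type*}

section CommSemiring

variable [CommSemiring K] [Semiring W] [Algebra K W]

theorem eq_top_of_generators_smul_mem [AddCommMonoid F] [Module K F] [Module W F]
    [IsScalarTower K W F] {s : Set W} (hs : Algebra.adjoin K s = ⊤) {v : F}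
    (hv : Submodule.span W {v} = ⊤) {S : Submodule K F} (hvS : v ∈ S)
    (hsS : ∀ a ∈ s, ∀ m ∈ S, a • m ∈ S) : S = ⊤ := by
  have stable (a : W) : ∀ m ∈ S, a • m ∈ S := by
    have ha : a ∈ Algebra.adjoin K s := hs ▸ Algebra.mem_top
    induction ha using Algebra.adjoin_induction with
    | mem a ha => exact hsS a ha
    | algebraMap c => exact fun m hm => by simpa only [algebraMap_smul] using S.smul_mem c hm
    | add a b _ _ iha ihb =>
      exact fun m hm => by simpa only [add_smul] using S.add_mem (iha m hm) (ihb m hm)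
    | mul a b _ _ iha ihb =>
      exact fun m hm => by simpa only [mul_smul] using iha _ (ihb m hm)
  refine Submodule.eq_top_iff'.2 fun x => ?_
  obtain ⟨a, rfl⟩ := Submodule.mem_span_singleton.1 (hv ▸ Submodule.mem_top (x := x))
  exact stable a v hvS

theorem exists_finite_mem_adjoin {s : Set W} {a : W} (ha : a ∈ Algebra.adjoin K s) :
    ∃ t ⊆ s, t.Finite ∧ a ∈ Algebra.adjoin K t := by
  have union {a b : W} : (∃ t ⊆ s, t.Finite ∧ a ∈ Algebra.adjoin K t) →
      (∃ t ⊆ s, t.Finite ∧ b ∈ Algebra.adjoin K t) →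
      ∃ t ⊆ s, t.Finite ∧ a ∈ Algebra.adjoin K t ∧ b ∈ Algebra.adjoin K t := by
    rintro ⟨t, hts, ht, ha⟩ ⟨t', hts', ht', hb⟩
    exact ⟨t ∪ t', Set.union_subset hts hts', ht.union ht',
      Algebra.adjoin_mono Set.subset_union_left ha, Algebra.adjoin_mono Set.subset_union_right hb⟩
  induction ha using Algebra.adjoin_induction with
  | mem a ha =>
    exact ⟨{a}, Set.singleton_subset_iff.2 ha, Set.finite_singleton a,
      Algebra.self_mem_adjoin_singleton K a⟩
  | algebraMap c => exact ⟨∅, Set.empty_subset s, Set.finite_empty, algebraMap_mem _ c⟩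
  | add a b _ _ iha ihb =>
    obtain ⟨t, hts, ht, ha, hb⟩ := union iha ihb
    exact ⟨t, hts, ht, add_mem ha hb⟩
  | mul a b _ _ iha ihb =>
    obtain ⟨t, hts, ht, ha, hb⟩ := union iha ihb
    exact ⟨t, hts, ht, mul_mem ha hb⟩

theorem mul_one_sup_pow_succ_le {U Y : Submodule K W} (hYU : Y * U ≤ U * Y ⊔ 1) (n : ℕ) :
    Y * (1 ⊔ U) ^ (n + 1) ≤ (1 ⊔ U) ^ (n + 1) * Y ⊔ (1 ⊔ U) ^ n := by
  have base : Y * (1 ⊔ U) ≤ (1 ⊔ U) * Y ⊔ 1 := by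
    rw [Submodule.mul_sup, Submodule.sup_mul, mul_one, one_mul, sup_assoc]
    exact sup_le_sup_left hYU Y
  induction n with
  | zero => simpa only [zero_add, pow_one, pow_zero] using base
  | succ n ih =>
    calc Y * (1 ⊔ U) ^ (n + 1 + 1)
        = Y * (1 ⊔ U) ^ (n + 1) * (1 ⊔ U) := by rw [pow_succ, mul_assoc]
      _ ≤ ((1 ⊔ U) ^ (n + 1) * Y ⊔ (1 ⊔ U) ^ n) * (1 ⊔ U) := by gcongr
      _ = (1 ⊔ U) ^ (n + 1) * (Y * (1 ⊔ U)) ⊔ (1 ⊔ U) ^ (n + 1) := by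
        rw [Submodule.sup_mul, mul_assoc, ← pow_succ]
      _ ≤ (1 ⊔ U) ^ (n + 1) * ((1 ⊔ U) * Y ⊔ 1) ⊔ (1 ⊔ U) ^ (n + 1) := by gcongr
      _ = (1 ⊔ U) ^ (n + 1 + 1) * Y ⊔ (1 ⊔ U) ^ (n + 1) := by
        rw [Submodule.mul_sup, ← mul_assoc, ← pow_succ, mul_one, sup_assoc, sup_idem]

theorem one_sup_pow_le_adjoin (U : Submodule K W) (n : ℕ) :
    (1 ⊔ U) ^ n ≤ (Algebra.adjoin K (U : Set W)).toSubmodule := by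
  set S := Algebra.adjoin K (U : Set W)
  have base : 1 ⊔ U ≤ S.toSubmodule :=
    sup_le (Submodule.one_le.2 S.one_mem) Algebra.subset_adjoin
  induction n with
  | zero => exact Submodule.one_le.2 S.one_mem
  | succ n ih =>
    exact pow_succ (1 ⊔ U) n ▸ Submodule.mul_le.2 fun a ha b hb => S.mul_mem (ih ha) (base hb)

theorem smul_eq_zero_of_mem_mul [AddCommMonoid F] [Module W F] {A Y : Submodule K W} {N : W}
    (hN : N ∈ A * Y) {x : F} (hx : ∀ y ∈ Y, y • x = 0) : N • x = 0 := by
  induction hN using Submodule.mul_induction_on' with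
  | mem_mul_mem a _ y hy => rw [mul_smul, hx y hy, smul_zero]
  | add b _ b' _ ihb ihb' => rw [add_smul, ihb, ihb', add_zero]

variable [AddCommMonoid F] [Module K F] [Module W F] [IsScalarTower K W F]

/-- The span of the vectors obtained from `v` by applying at most `n` elements of `U`. For `v` the
vacuum of a Fock space and `U` its creation operators, this filters by the number of particles. -/
def creationFiltration (U : Submodule K W) (v : F) (n : ℕ) : Submodule K F :=
  ((1 ⊔ U) ^ n).map ((LinearMap.toSpanSingleton W F v).restrictScalars K)

theorem mem_creationFiltration {U : Submodule K W} {v : F} {n : ℕ} {x : F} :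
    x ∈ creationFiltration U v n ↔ ∃ a ∈ (1 ⊔ U) ^ n, a • v = x :=
  Iff.rfl

theorem creationFiltration_mono (U : Submodule K W) (v : F) :
    Monotone (creationFiltration U v) := fun _ _ h =>
  Submodule.map_mono (pow_le_pow_right₀ le_sup_left h)

theorem smul_mem_creationFiltration_succ {U : Submodule K W} {v : F} {n : ℕ} {u : W} (hu : u ∈ U)
    {x : F} (hx : x ∈ creationFiltration U v n) : u • x ∈ creationFiltration U v (n + 1) := by
  obtain ⟨a, ha, rfl⟩ := mem_creationFiltration.1 hx
  exact mem_creationFiltration.2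
    ⟨u * a, pow_succ' (1 ⊔ U) n ▸ Submodule.mul_mem_mul (Submodule.mem_sup_right hu) ha,
      mul_smul u a v⟩

theorem smul_mem_creationFiltration_of_succ {U Y : Submodule K W} (hYU : Y * U ≤ U * Y ⊔ 1)
    {v : F} (hv : ∀ y ∈ Y, y • v = 0) {n : ℕ} {y : W} (hy : y ∈ Y) {x : F}
    (hx : x ∈ creationFiltration U v (n + 1)) : y • x ∈ creationFiltration U v n := by
  obtain ⟨a, ha, rfl⟩ := mem_creationFiltration.1 hx
  obtain ⟨b, hb, c, hc, hbc⟩ := Submodule.mem_sup.1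
    (mul_one_sup_pow_succ_le hYU n (Submodule.mul_mem_mul hy ha))
  exact mem_creationFiltration.2
    ⟨c, hc, by rw [← mul_smul, ← hbc, add_smul, smul_eq_zero_of_mem_mul hb hv, zero_add]⟩

theorem exists_mem_creationFiltration {U Y : Submodule K W} (hYU : Y * U ≤ U * Y ⊔ 1)
    (hUY : Algebra.adjoin K ((U : Set W) ∪ Y) = ⊤) {v : F} (hgen : Submodule.span W {v} = ⊤)
    (hv : ∀ y ∈ Y, y • v = 0) (x : F) : ∃ n, x ∈ creationFiltration U v n := by
  have directed := (creationFiltration_mono U v).directed_le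
  suffices ⨆ n, creationFiltration U v n = ⊤ from
    (Submodule.mem_iSup_of_directed _ directed).1 (this ▸ Submodule.mem_top)
  refine eq_top_of_generators_smul_mem hUY hgen
    (Submodule.mem_iSup_of_mem 0 (mem_creationFiltration.2
      ⟨1, pow_zero (1 ⊔ U) ▸ Submodule.one_le.1 le_rfl, one_smul W v⟩)) ?_
  rintro a ha m hm
  obtain ⟨n, hm⟩ := (Submodule.mem_iSup_of_directed _ directed).1 hm
  rcases ha with ha | ha
  · exact Submodule.mem_iSup_of_mem (n + 1) (smul_mem_creationFiltration_succ ha hm)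
  · exact Submodule.mem_iSup_of_mem n (smul_mem_creationFiltration_of_succ hYU hv ha
      (creationFiltration_mono U v n.le_succ hm))

end CommSemiring

section Field

variable [Field K] [CharZero K] [Ring W] [Algebra K W]
  [AddCommGroup F] [Module K F] [Module W F] [IsScalarTower K W F]

theorem exists_commutator_eq_nsmul_of_mem_closure {N : W} {s : Set W}
    (hN : ∀ u ∈ s, N * u = u * N + u) {m : W} (hm : m ∈ Submonoid.closure s) :
    ∃ k : ℕ, N * m = m * N + k • m ∧ (k = 0 → m = 1) := by
  induction hm using Submonoid.closure_induction_left with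
  | one => exact ⟨0, by simp only [mul_one, one_mul, zero_smul, add_zero], fun _ => rfl⟩
  | mul_left u hu m _ ih =>
    obtain ⟨k, hk, -⟩ := ih
    refine ⟨k + 1, ?_, fun h => absurd h k.succ_ne_zero⟩
    calc N * (u * m) = u * (N * m) + u * m := by rw [← mul_assoc, hN u hu, add_mul, mul_assoc]
      _ = u * m * N + (k + 1) • (u * m) := by
        rw [hk, mul_add, mul_smul_comm, add_smul, one_smul, mul_assoc, add_assoc]

/- On `a • v` the operator `N` acts diagonalizably with eigenvalues the number of factors of the
monomials in `a`; only the empty monomial has eigenvalue `0`. -/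
theorem smul_mem_span_sup_iSup_eigenspace {N : W} {s : Set W} (hN : ∀ u ∈ s, N * u = u * N + u)
    {v : F} (hv : N • v = 0) {a : W} (ha : a ∈ Algebra.adjoin K s) :
    a • v ∈ Submodule.span K {v} ⊔ ⨆ μ ≠ 0, (Algebra.lsmul K K F N).eigenspace μ := by
  rw [← Subalgebra.mem_toSubmodule, Algebra.adjoin_eq_span] at ha
  induction ha using Submodule.span_induction with
  | mem m hm =>
    obtain ⟨k, hk, hk1⟩ := exists_commutator_eq_nsmul_of_mem_closure hN hm
    rcases eq_or_ne k 0 with rfl | hk0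
    · rw [hk1 rfl, one_smul]
      exact Submodule.mem_sup_left (Submodule.mem_span_singleton_self v)
    · refine Submodule.mem_sup_right (Submodule.mem_iSup_of_mem (k : K)
        (Submodule.mem_iSup_of_mem (Nat.cast_ne_zero.2 hk0)
          (Module.End.mem_eigenspace_iff.2 ?_)))
      change N • m • v = (k : K) • m • v
      rw [← mul_smul, hk, add_smul, mul_smul, hv, smul_zero, zero_add, Nat.cast_smul_eq_nsmul,
        smul_assoc]
  | zero => simp only [zero_smul, Submodule.zero_mem]
  | add a b _ _ iha ihb => simpa only [add_smul] using Submodule.add_mem _ iha ihb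
  | smul c a _ ih => simpa only [smul_assoc] using Submodule.smul_mem _ c ih

theorem smul_mem_span_of_euler {N : W} {s : Set W} (hN : ∀ u ∈ s, N * u = u * N + u) {v : F}
    (hv : N • v = 0) {a : W} (ha : a ∈ Algebra.adjoin K s) (hNa : N • a • v = 0) :
    a • v ∈ Submodule.span K {v} := by
  set L : Module.End K F := Algebra.lsmul K K F N
  have zero_mem {x : F} (hx : N • x = 0) : x ∈ L.eigenspace 0 :=
    Module.End.mem_eigenspace_iff.2 (hx.trans (zero_smul K x).symm)
  obtain ⟨w, hw, r, hr, hwr⟩ := Submodule.mem_sup.1 (smul_mem_span_sup_iSup_eigenspace hN hv ha)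
  have hw0 : w ∈ L.eigenspace 0 :=
    (Submodule.span_singleton_le_iff_mem v _).2 (zero_mem hv) hw
  have hr0 : r ∈ L.eigenspace 0 := by
    simpa only [← hwr, add_sub_cancel_left] using Submodule.sub_mem _ (zero_mem hNa) hw0
  have : r = 0 := by
    simpa only [Submodule.mem_bot] using
      (L.eigenspaces_iSupIndep 0).le_bot (Submodule.mem_inf.2 ⟨hr0, hr⟩)
  rwa [← hwr, this, add_zero]

theorem mem_span_of_forall_annihilator_smul_eq_zero {U Y : Submodule K W}
    (hEuler : ∀ s ⊆ (U : Set W), s.Finite → ∃ N ∈ (⊤ : Submodule K W) * Y, ∀ u ∈ s,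
      N * u = u * N + u) {v : F} (hv : ∀ y ∈ Y, y • v = 0) {n : ℕ} {x : F}
    (hx : x ∈ creationFiltration U v n) (hYx : ∀ y ∈ Y, y • x = 0) :
    x ∈ Submodule.span K {v} := by
  obtain ⟨a, ha, rfl⟩ := mem_creationFiltration.1 hx
  obtain ⟨s, hsU, hs, ha⟩ := exists_finite_mem_adjoin (one_sup_pow_le_adjoin U n ha)
  obtain ⟨N, hNY, hN⟩ := hEuler s hsU hs
  exact smul_mem_span_of_euler hN (smul_eq_zero_of_mem_mul hNY hv) ha
    (smul_eq_zero_of_mem_mul hNY hYx)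

theorem mem_span_of_mem_creationFiltration {U Y : Submodule K W} (hYU : Y * U ≤ U * Y ⊔ 1)
    (hEuler : ∀ s ⊆ (U : Set W), s.Finite → ∃ N ∈ (⊤ : Submodule K W) * Y, ∀ u ∈ s,
      N * u = u * N + u)
    {v : F} (hv : ∀ y ∈ Y, y • v = 0) {n : ℕ} {x : F} (hx : x ∈ creationFiltration U v n)
    (hx0 : x ≠ 0) : v ∈ Submodule.span W {x} := by
  have of_mem_span {x : F} (hx : x ∈ Submodule.span K {v}) (hx0 : x ≠ 0) :
      v ∈ Submodule.span W {x} := by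
    obtain ⟨c, rfl⟩ := Submodule.mem_span_singleton.1 hx
    have hc : c ≠ 0 := fun h => hx0 (by rw [h, zero_smul])
    exact Submodule.mem_span_singleton.2 ⟨algebraMap K W c⁻¹, by
      rw [algebraMap_smul, inv_smul_smul₀ hc]⟩
  induction n generalizing x with
  | zero =>
    refine of_mem_span ?_ hx0
    obtain ⟨a, ha, rfl⟩ := mem_creationFiltration.1 hx
    obtain ⟨c, rfl⟩ := Submodule.mem_one.1 (pow_zero (1 ⊔ U) ▸ ha)
    exact Submodule.mem_span_singleton.2 ⟨c, (algebraMap_smul W c v).symm⟩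
  | succ n ih =>
    by_cases hYx : ∀ y ∈ Y, y • x = 0
    · exact of_mem_span (mem_span_of_forall_annihilator_smul_eq_zero hEuler hv hx hYx) hx0
    · push Not at hYx
      obtain ⟨y, hy, hyx⟩ := hYx
      exact (Submodule.span_singleton_le_iff_mem (y • x) _).2
        (Submodule.smul_mem _ y (Submodule.mem_span_singleton_self x))
        (ih (smul_mem_creationFiltration_of_succ hYU hv hy hx) hyx)

theorem isSimpleModule_of_euler {U Y : Submodule K W} (hYU : Y * U ≤ U * Y ⊔ 1)
    (hUY : Algebra.adjoin K ((U : Set W) ∪ Y) = ⊤)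
    (hEuler : ∀ s ⊆ (U : Set W), s.Finite → ∃ N ∈ (⊤ : Submodule K W) * Y, ∀ u ∈ s,
      N * u = u * N + u)
    {v : F} (hgen : Submodule.span W {v} = ⊤) (hv : ∀ y ∈ Y, y • v = 0) (hv0 : v ≠ 0) :
    IsSimpleModule W F := by
  refine isSimpleModule_iff_toSpanSingleton_surjective.2
    ⟨nontrivial_of_ne v 0 hv0, fun x hx0 => ?_⟩
  obtain ⟨n, hn⟩ := exists_mem_creationFiltration hYU hUY hgen hv x
  rw [← LinearMap.range_eq_top, LinearMap.range_toSpanSingleton, eq_top_iff, ← hgen]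
  exact (Submodule.span_singleton_le_iff_mem _ _).2
    (mem_span_of_mem_creationFiltration hYU hEuler hv hn hx0)

end Field

end SimplicityCriterion

section DualFamily

variable {K X Y : Type*} [Field K] [AddCommGroup X] [Module K X] [AddCommGroup Y] [Module K Y]

theorem exists_dual_family_of_separatingLeft {B : X →ₗ[K] Y →ₗ[K] K} (hB : B.SeparatingLeft)
    {s : Set X} (hs : s.Finite) :
    ∃ (n : ℕ) (a : Fin n → X) (y : Fin n → Y), ∀ x ∈ s, ∑ i, B x (y i) • a i = x := by
  let A := Submodule.span K s
  have : FiniteDimensional K A := FiniteDimensional.span_of_finite K hs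
  let b := Module.finBasis K A
  have injective : Function.Injective (B ∘ₗ A.subtype) :=
    (injective_iff_map_eq_zero _).2 fun x hx => Subtype.ext (hB x (LinearMap.congr_fun hx))
  -- All functionals on the finite-dimensional span of `s` are represented by elements of `Y`.
  choose y hy using fun i => LinearMap.flip_surjective_iff₁.2 injective (b.coord i)
  refine ⟨_, fun i => (b i : X), y, fun x hx => ?_⟩
  have expansion := congrArg A.subtype (b.sum_repr ⟨x, Submodule.subset_span hx⟩)
  rw [map_sum] at expansion
  refine Eq.trans (Finset.sum_congr rfl fun i _ => ?_) expansion
  rw [map_smul, ← Module.Basis.coord_apply, ← hy i]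
  rfl

end DualFamily

section ScalarCommutator

variable {K W : Type*} [CommRing K] [Ring W] [Algebra K W]

theorem pow_succ_mul_of_commutator_eq_algebraMap {a b : W} {c : K}
    (hab : a * b = b * a + algebraMap K W c) (n : ℕ) :
    a ^ (n + 1) * b = b * a ^ (n + 1) + ((n + 1 : K) * c) • a ^ n := by
  induction n with
  | zero =>
    simp only [zero_add, pow_one, hab, pow_zero, Nat.cast_zero, one_mul,
      Algebra.algebraMap_eq_smul_one]
  | succ n ih =>
    rw [pow_succ' a (n + 1), mul_assoc, ih, mul_add, ← mul_assoc, hab, add_mul, mul_assoc,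
      mul_smul_comm, ← pow_succ', ← pow_succ', Algebra.algebraMap_eq_smul_one, smul_mul_assoc,
      one_mul]
    push_cast
    module

theorem exists_pow_smul_eq_zero {F : Type*} [AddCommGroup F] [Module K F] [Module W F]
    [IsScalarTower K W F] {s : Set W} (hs : Algebra.adjoin K s = ⊤) {v : F}
    (hgen : Submodule.span W {v} = ⊤) {a : W} (hav : a • v = 0)
    (hcomm : ∀ b ∈ s, ∃ c : K, a * b = b * a + algebraMap K W c) (m : F) :
    ∃ n : ℕ, a ^ n • m = 0 := by
  have mem_iff (m : F) : m ∈ (Algebra.lsmul K K F a).maxGenEigenspace 0 ↔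
      ∃ n : ℕ, a ^ n • m = 0 := by
    simp only [Module.End.mem_maxGenEigenspace, zero_smul, sub_zero, ← map_pow, Algebra.lsmul_coe]
  suffices (Algebra.lsmul K K F a).maxGenEigenspace 0 = ⊤ from
    (mem_iff m).1 (this ▸ Submodule.mem_top)
  refine eq_top_of_generators_smul_mem hs hgen ((mem_iff v).2 ⟨1, by rwa [pow_one]⟩)
    fun b hb m hm => ?_
  obtain ⟨c, hab⟩ := hcomm b hb
  obtain ⟨n, hn⟩ := (mem_iff m).1 hm
  refine (mem_iff _).2 ⟨n + 1, ?_⟩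
  rw [smul_smul, pow_succ_mul_of_commutator_eq_algebraMap hab, add_smul, mul_smul, pow_succ',
    mul_smul a, hn, smul_assoc, hn, smul_zero, smul_zero, smul_zero, add_zero]

end ScalarCommutator

/-- A supersymplectic space: a superspace `P = P₀ ⊕ P₁`, encoded by the projection onto `P₀` along
`P₁`, with a nondegenerate form that is alternating on `P₀`, symmetric on `P₁` and for which `P₀`
and `P₁` are orthogonal. The model is `V ⊕ V*`, where the form records the supercommutators of the
generators of the Weyl superalgebra. -/
structure SuperSymplectic (K P : Type*) [CommRing K] [AddCommGroup P] [Module K P] where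
  evenPart : Module.End K P
  form : LinearMap.BilinForm K P
  evenPart_evenPart (x : P) : evenPart (evenPart x) = evenPart x
  form_evenPart (x y : P) : form (evenPart x) y = form x (evenPart y)
  form_swap (x y : P) : form x y = -form y (evenPart x - (x - evenPart x))
  separatingRight : form.SeparatingRight

namespace SuperSymplectic

section CommRing

variable {K P A : Type*} [CommRing K] [AddCommGroup P] [Module K P] [Ring A] [Algebra K A]
  (Ω : SuperSymplectic K P)

/-- The projection onto the odd part `P₁`. -/
def oddPart : Module.End K P := LinearMap.id - Ω.evenPart

/-- The parity involution, `1` on `P₀` and `-1` on `P₁`. -/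
def parity : Module.End K P := Ω.evenPart - Ω.oddPart

theorem oddPart_apply (x : P) : Ω.oddPart x = x - Ω.evenPart x := rfl

theorem parity_apply (x : P) : Ω.parity x = Ω.evenPart x - Ω.oddPart x := rfl

theorem evenPart_add_oddPart (x : P) : Ω.evenPart x + Ω.oddPart x = x :=
  add_sub_cancel _ x

theorem evenPart_oddPart (x : P) : Ω.evenPart (Ω.oddPart x) = 0 := by
  rw [oddPart_apply, map_sub, evenPart_evenPart, sub_self]

variable {Ω} in
theorem oddPart_of_even {x : P} (hx : Ω.evenPart x = x) : Ω.oddPart x = 0 := by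
  rw [oddPart_apply, hx, sub_self]

variable {Ω} in
theorem oddPart_of_odd {x : P} (hx : Ω.evenPart x = 0) : Ω.oddPart x = x := by
  rw [oddPart_apply, hx, sub_zero]

theorem parity_parity (x : P) : Ω.parity (Ω.parity x) = x := by
  simp only [parity_apply, oddPart_apply, map_sub, evenPart_evenPart]
  abel

theorem parity_evenPart (x : P) : Ω.parity (Ω.evenPart x) = Ω.evenPart (Ω.parity x) := by
  simp only [parity_apply, oddPart_apply, map_sub]

theorem form_oddPart (x y : P) : Ω.form (Ω.oddPart x) y = Ω.form x (Ω.oddPart y) := by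
  simp only [oddPart_apply, map_sub, LinearMap.sub_apply, form_evenPart]

theorem form_parity_parity (x y : P) : Ω.form (Ω.parity x) (Ω.parity y) = Ω.form x y := by
  have : Ω.form (Ω.parity x) (Ω.parity y) = Ω.form x (Ω.parity (Ω.parity y)) := by
    simp only [parity_apply, map_sub, LinearMap.sub_apply, form_evenPart, form_oddPart]
  rw [this, parity_parity]

/-- A linear map `T : P → A` satisfies the supercommutation relations when the supercommutator of
`T x` and `T y` is the scalar `form x y`. Splitting `x` into its even and odd parts makes this a
single relation, linear in both arguments. -/
def IsRep (T : P →ₗ[K] A) : Prop :=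
  ∀ x y, T x * T y = T y * T (Ω.evenPart x) + T (Ω.parity y) * T (Ω.oddPart x) +
    algebraMap K A (Ω.form x y)

/-- The projection onto a complementary creation space along an annihilation space, both of them
graded and isotropic. -/
structure IsPolarization (q : Module.End K P) : Prop where
  isIdempotentElem : IsIdempotentElem q
  map_evenPart (x : P) : q (Ω.evenPart x) = Ω.evenPart (q x)
  form_apply_left (x y : P) : Ω.form (q x) y = Ω.form x (y - q y)

variable {Ω}

section IsRep

variable {T : P →ₗ[K] A} (hT : Ω.IsRep T)
include hT

theorem IsRep.even_mul {x : P} (hx : Ω.evenPart x = x) (y : P) :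
    T x * T y = T y * T x + algebraMap K A (Ω.form x y) := by
  rw [hT, hx, oddPart_of_even hx, map_zero, mul_zero, add_zero]

theorem IsRep.odd_mul {x : P} (hx : Ω.evenPart x = 0) (y : P) :
    T x * T y = T (Ω.parity y) * T x + algebraMap K A (Ω.form x y) := by
  rw [hT, hx, oddPart_of_odd hx, map_zero, mul_zero, zero_add]

theorem IsRep.comp {g : Module.End K P} (hg_even : ∀ x, g (Ω.evenPart x) = Ω.evenPart (g x))
    (hg_form : ∀ x y, Ω.form (g x) (g y) = Ω.form x y) : Ω.IsRep (T ∘ₗ g) := fun x y => by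
  simpa only [LinearMap.comp_apply, parity_apply, oddPart_apply, map_sub, hg_even, hg_form]
    using hT (g x) (g y)

end IsRep

namespace IsPolarization

variable {q : Module.End K P} (hq : Ω.IsPolarization q)
include hq

theorem apply_apply (x : P) : q (q x) = q x :=
  LinearMap.congr_fun hq.isIdempotentElem x

theorem apply_sub_apply (x : P) : q (x - q x) = 0 := by
  rw [map_sub, hq.apply_apply, sub_self]

theorem map_oddPart (x : P) : q (Ω.oddPart x) = Ω.oddPart (q x) := by
  simp only [oddPart_apply, map_sub, hq.map_evenPart]

theorem map_parity (x : P) : q (Ω.parity x) = Ω.parity (q x) := by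
  simp only [parity_apply, map_sub, hq.map_evenPart, hq.map_oddPart]

theorem form_eq_zero {x y : P} (hx : q x = x) (hy : q y = y) : Ω.form x y = 0 := by
  rw [← hx, hq.form_apply_left, hy, sub_self, map_zero]

theorem form_sub_apply (x y : P) : Ω.form (x - q x) y = Ω.form x (q y) := by
  rw [map_sub, LinearMap.sub_apply, hq.form_apply_left, map_sub, sub_sub_cancel]

theorem mem_range {x : P} : x ∈ LinearMap.range q ↔ q x = x :=
  LinearMap.IsIdempotentElem.mem_range_iff hq.isIdempotentElem

end IsPolarization

/-- The space of creation operators of a polarization. -/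
def creators (q : Module.End K P) (T : P →ₗ[K] A) : Submodule K A := (LinearMap.range q).map T

/-- The space of annihilation operators of a polarization. -/
def annihilators (q : Module.End K P) (T : P →ₗ[K] A) : Submodule K A := (LinearMap.ker q).map T

theorem apply_mem_creators {q : Module.End K P} (T : P →ₗ[K] A) (x : P) :
    T (q x) ∈ creators q T :=
  Submodule.mem_map_of_mem (LinearMap.mem_range_self q x)

theorem apply_mem_annihilators {q : Module.End K P} (T : P →ₗ[K] A) {y : P} (hy : q y = 0) :
    T y ∈ annihilators q T :=
  Submodule.mem_map_of_mem (LinearMap.mem_ker.2 hy)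

section Polarization

variable {q : Module.End K P} (hq : Ω.IsPolarization q) {T : P →ₗ[K] A}
include hq

theorem IsPolarization.adjoin_creators_union_annihilators
    (hgen : Algebra.adjoin K (Set.range T) = ⊤) :
    Algebra.adjoin K ((creators q T : Set A) ∪ annihilators q T) = ⊤ := by
  refine top_unique (hgen ▸ Algebra.adjoin_le ?_)
  rintro _ ⟨x, rfl⟩
  rw [← add_sub_cancel (q x) x, map_add]
  exact add_mem (Algebra.subset_adjoin (.inl (apply_mem_creators T x)))
    (Algebra.subset_adjoin (.inr (apply_mem_annihilators T (hq.apply_sub_apply x))))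

variable (hT : Ω.IsRep T)
include hT

theorem IsRep.annihilators_mul_creators_le :
    annihilators q T * creators q T ≤ creators q T * annihilators q T ⊔ 1 := by
  refine Submodule.mul_le.2 ?_
  rintro _ ⟨y, hy, rfl⟩ _ ⟨_, ⟨u, rfl⟩, rfl⟩
  replace hy : q y = 0 := hy
  rw [hT, ← hq.map_parity]
  refine Submodule.add_mem_sup (Submodule.add_mem _
      (Submodule.mul_mem_mul (apply_mem_creators T _) (apply_mem_annihilators T ?_))
      (Submodule.mul_mem_mul (apply_mem_creators T _) (apply_mem_annihilators T ?_)))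
    (Submodule.algebraMap_mem _)
  · rw [hq.map_evenPart, hy, map_zero]
  · rw [hq.map_oddPart, hy, map_zero]

end Polarization

/-- The number operator of a creation operator `T a` and an annihilation operator `T y`. -/
def numberOp (Ω : SuperSymplectic K P) (T : P →ₗ[K] A) (a y : P) : A :=
  T (Ω.evenPart a) * T (Ω.evenPart y) + T (Ω.oddPart a) * T (Ω.oddPart y)

theorem IsRep.numberOp_mul {q : Module.End K P} (hq : Ω.IsPolarization q) {T : P →ₗ[K] A}
    (hT : Ω.IsRep T) {a u : P} (ha : q a = a) (hu : q u = u) (y : P) :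
    Ω.numberOp T a y * T u = T u * Ω.numberOp T a y +
      T (Ω.evenPart (Ω.form y (Ω.evenPart u) • a) + Ω.oddPart (Ω.form y (Ω.oddPart u) • a)) := by
  have even : T (Ω.evenPart a) * T (Ω.evenPart y) * T u =
      T u * (T (Ω.evenPart a) * T (Ω.evenPart y)) +
        T (Ω.evenPart (Ω.form y (Ω.evenPart u) • a)) := by
    have commute : T (Ω.evenPart a) * T u = T u * T (Ω.evenPart a) := by
      rw [hT.even_mul (Ω.evenPart_evenPart a),
        hq.form_eq_zero (by rw [hq.map_evenPart, ha]) hu, map_zero, add_zero]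
    rw [mul_assoc, hT.even_mul (Ω.evenPart_evenPart y), mul_add, ← mul_assoc, commute, mul_assoc,
      Ω.form_evenPart, ← Algebra.commutes, ← Algebra.smul_def, map_smul, map_smul]
  have odd : T (Ω.oddPart a) * T (Ω.oddPart y) * T u =
      T u * (T (Ω.oddPart a) * T (Ω.oddPart y)) +
        T (Ω.oddPart (Ω.form y (Ω.oddPart u) • a)) := by
    have commute : T (Ω.oddPart a) * T (Ω.parity u) = T u * T (Ω.oddPart a) := by
      rw [hT.odd_mul (Ω.evenPart_oddPart a), Ω.parity_parity,
        hq.form_eq_zero (by rw [hq.map_oddPart, ha]) (by rw [hq.map_parity, hu]), map_zero,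
        add_zero]
    rw [mul_assoc, hT.odd_mul (Ω.evenPart_oddPart y), mul_add, ← mul_assoc, commute, mul_assoc,
      Ω.form_oddPart, ← Algebra.commutes, ← Algebra.smul_def, map_smul, map_smul]
  rw [numberOp, add_mul, mul_add, even, odd, map_add]
  abel

end CommRing

section Field

variable {K P W : Type*} [Field K] [AddCommGroup P] [Module K P] [Ring W] [Algebra K W]
  {Ω : SuperSymplectic K P} {q : Module.End K P} {T : P →ₗ[K] W}

theorem IsPolarization.exists_dual_family (hq : Ω.IsPolarization q) {s : Set P} (hs : s.Finite)
    (hsq : ∀ x ∈ s, q x = x) :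
    ∃ (n : ℕ) (a y : Fin n → P), (∀ i, q (a i) = a i) ∧ (∀ i, q (y i) = 0) ∧
      ∀ x ∈ s, ∑ i, Ω.form (y i) x • a i = x := by
  obtain ⟨n, a, b, hab⟩ :=
    exists_dual_family_of_separatingLeft (LinearMap.flip_separatingLeft.2 Ω.separatingRight) hs
  refine ⟨n, fun i => q (a i), fun i => b i - q (b i), fun i => hq.apply_apply _,
    fun i => hq.apply_sub_apply _, fun x hx => ?_⟩
  calc ∑ i, Ω.form (b i - q (b i)) x • q (a i) = q (∑ i, Ω.form (b i) x • a i) := by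
        simp only [hq.form_sub_apply, hsq x hx, map_sum, map_smul]
    _ = q x := congrArg q (hab x hx)
    _ = x := hsq x hx

theorem IsRep.exists_euler (hT : Ω.IsRep T) (hq : Ω.IsPolarization q) {s : Set W}
    (hsU : s ⊆ creators q T) (hs : s.Finite) :
    ∃ N ∈ (⊤ : Submodule K W) * annihilators q T, ∀ u ∈ s, N * u = u * N + u := by
  obtain ⟨t, htq, ht, rfl⟩ : ∃ t ⊆ (LinearMap.range q : Set P), t.Finite ∧ s = T '' t :=
    Set.exists_subset_image_finite_and.1 ⟨s, hsU, hs, rfl⟩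
  replace htq (x : P) (hx : x ∈ t) : q x = x := hq.mem_range.1 (htq hx)
  obtain ⟨n, a, y, ha, hy, hay⟩ := hq.exists_dual_family (ht.union (ht.image Ω.evenPart)) (by
    rintro _ (hx | ⟨x, hx, rfl⟩)
    · exact htq _ hx
    · rw [hq.map_evenPart, htq x hx])
  refine ⟨∑ i, Ω.numberOp T (a i) (y i), Submodule.sum_mem _ fun i _ => Submodule.add_mem _
    (Submodule.mul_mem_mul Submodule.mem_top (apply_mem_annihilators T ?_))
    (Submodule.mul_mem_mul Submodule.mem_top (apply_mem_annihilators T ?_)), ?_⟩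
  · rw [hq.map_evenPart, hy, map_zero]
  · rw [hq.map_oddPart, hy, map_zero]
  rintro _ ⟨u, hu, rfl⟩
  have even : ∑ i, Ω.form (y i) (Ω.evenPart u) • a i = Ω.evenPart u :=
    hay _ (.inr ⟨u, hu, rfl⟩)
  have odd : ∑ i, Ω.form (y i) (Ω.oddPart u) • a i = Ω.oddPart u := by
    simp only [oddPart_apply, map_sub, sub_smul, Finset.sum_sub_distrib, hay u (.inl hu), even]
  simp only [Finset.sum_mul, Finset.mul_sum, hT.numberOp_mul hq (ha _) (htq u hu),
    Finset.sum_add_distrib, ← map_sum, even, odd]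
  rw [Ω.evenPart_evenPart, oddPart_of_odd (Ω.evenPart_oddPart u), Ω.evenPart_add_oddPart]

variable [CharZero K] {F : Type*} [AddCommGroup F] [Module K F] [Module W F]
  [IsScalarTower K W F] (hT : Ω.IsRep T) (hgenW : Algebra.adjoin K (Set.range T) = ⊤)
  {v : F} (hgenF : Submodule.span W {v} = ⊤) (hq : Ω.IsPolarization q)
  (hv : ∀ y, q y = 0 → T y • v = 0)
include hT hgenW hgenF hq hv

theorem IsRep.isSimpleModule (hv0 : v ≠ 0) : IsSimpleModule W F := by
  refine isSimpleModule_of_euler (hT.annihilators_mul_creators_le hq)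
    (hq.adjoin_creators_union_annihilators hgenW) (fun s hsU hs => hT.exists_euler hq hsU hs)
    hgenF ?_ hv0
  rintro _ ⟨y, hy, rfl⟩
  exact hv y hy

/- Some even annihilation operator has nonzero commutator with `T x` and acts locally nilpotently;
commuting `T x` past its powers, each vanishing power can be lowered on a vector killed by `T x`. -/
theorem IsRep.eq_zero_of_even_smul_eq_zero {x : P} (hx : Ω.evenPart x = x) (hqx : q x ≠ 0)
    {m : F} (hm : T x • m = 0) : m = 0 := by
  obtain ⟨a, ha_even, ha, hax⟩ : ∃ a, Ω.evenPart a = a ∧ q a = 0 ∧ Ω.form a x ≠ 0 := by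
    obtain ⟨y, hy⟩ := not_forall.1 (mt (Ω.separatingRight (q x)) hqx)
    refine ⟨Ω.evenPart (y - q y), Ω.evenPart_evenPart _, ?_, ?_⟩
    · rw [hq.map_evenPart, hq.apply_sub_apply, map_zero]
    · rwa [Ω.form_evenPart, hx, hq.form_sub_apply]
  have nilpotent : ∃ n, T a ^ n • m = 0 := by
    refine exists_pow_smul_eq_zero hgenW hgenF (hv a ha) ?_ m
    rintro _ ⟨y, rfl⟩
    exact ⟨Ω.form a y, hT.even_mul ha_even y⟩
  obtain ⟨n, hn⟩ := nilpotent
  induction n with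
  | zero => rwa [pow_zero, one_smul] at hn
  | succ n ih =>
    have key : ((n + 1 : K) * Ω.form a x) • T a ^ n • m = 0 := by
      rw [← smul_assoc, eq_sub_of_add_eq' (pow_succ_mul_of_commutator_eq_algebraMap
        (hT.even_mul ha_even x) n).symm, sub_smul, mul_smul, mul_smul, hm, hn, smul_zero,
        smul_zero, sub_zero]
    exact ih ((smul_eq_zero.1 key).resolve_left
      (mul_ne_zero (Nat.cast_add_one_ne_zero n) hax))

end Field

end SuperSymplectic

section BosonFermion

open TensorProduct

variable {R X ι : Type*} [CommRing R] [AddCommGroup X] [Module R X]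

/-- The derivation of the symmetric algebra of `X`, realized as polynomials in the members of the
basis `b`, that extends a functional on `X`. -/
def basisDerivation (b : Module.Basis ι R X) :
    Module.Dual R X →ₗ[R] Derivation R (MvPolynomial ι R) (MvPolynomial ι R) :=
  (MvPolynomial.mkDerivationEquiv (R := R)).toLinearMap ∘ₗ (Algebra.linearMap R _).compLeft ι ∘ₗ
    (b.constr R).symm.toLinearMap

theorem basisDerivation_X (b : Module.Basis ι R X) (f : Module.Dual R X) (i : ι) :
    basisDerivation b f (MvPolynomial.X i) = algebraMap R _ (f (b i)) :=
  MvPolynomial.mkDerivation_X (A := MvPolynomial ι R) R _ i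

theorem basisDerivation_constr_X (b : Module.Basis ι R X) (f : Module.Dual R X) (a : X) :
    basisDerivation b f (b.constr R MvPolynomial.X a) = algebraMap R _ (f a) := by
  have : (basisDerivation b f).toLinearMap ∘ₗ b.constr R MvPolynomial.X =
      Algebra.linearMap R (MvPolynomial ι R) ∘ₗ f :=
    b.ext fun i => by
      simp only [LinearMap.comp_apply, Module.Basis.constr_basis, Derivation.coeFn_coe,
        basisDerivation_X, Algebra.linearMap_apply]
  exact LinearMap.congr_fun this a

theorem basisDerivation_comm (b : Module.Basis ι R X) (f g : Module.Dual R X)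
    (x : MvPolynomial ι R) :
    basisDerivation b f (basisDerivation b g x) = basisDerivation b g (basisDerivation b f x) := by
  have : ⁅basisDerivation b f, basisDerivation b g⁆ = 0 :=
    MvPolynomial.derivation_ext fun i => by
      simp only [Derivation.commutator_apply, basisDerivation_X, Derivation.map_algebraMap,
        sub_self, Derivation.coe_zero, Pi.zero_apply]
  exact sub_eq_zero.1 ((Derivation.commutator_apply ..).symm.trans (DFunLike.congr_fun this x))

/-- The bosonic operator of `(a, f)` on the symmetric algebra: multiplication by `a` plus the
derivation along `f`. -/
def bosonOp (b : Module.Basis ι R X) :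
    X × Module.Dual R X →ₗ[R] Module.End R (MvPolynomial ι R) :=
  LinearMap.coprod (LinearMap.mul R _ ∘ₗ b.constr R MvPolynomial.X)
    { toFun := fun f => (basisDerivation b f).toLinearMap
      map_add' := fun f g => by rw [map_add]; rfl
      map_smul' := fun c f => by rw [map_smul]; rfl }

theorem bosonOp_apply (b : Module.Basis ι R X) (z : X × Module.Dual R X)
    (x : MvPolynomial ι R) :
    bosonOp b z x = b.constr R MvPolynomial.X z.1 * x + basisDerivation b z.2 x :=
  rfl

theorem bosonOp_mul_bosonOp (b : Module.Basis ι R X) (z z' : X × Module.Dual R X) :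
    bosonOp b z * bosonOp b z' = bosonOp b z' * bosonOp b z +
      algebraMap R _ (z.2 z'.1 - z'.2 z.1) := by
  refine LinearMap.ext fun x => ?_
  simp only [Module.End.mul_apply, LinearMap.add_apply, bosonOp_apply, map_add,
    Derivation.leibniz, basisDerivation_constr_X, basisDerivation_comm b z.2 z'.2,
    Module.algebraMap_end_apply, smul_eq_mul]
  rw [Algebra.smul_def, map_sub]
  ring

theorem bosonOp_one (b : Module.Basis ι R X) {z : X × Module.Dual R X} (hz : z.1 = 0) :
    bosonOp b z 1 = 0 := by
  rw [bosonOp_apply, hz, map_zero, zero_mul, Derivation.map_one_eq_zero, add_zero]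

/-- The fermionic operator of `(a, f)` on the exterior algebra: multiplication by `a` plus the
contraction with `f`. -/
def fermionOp : X × Module.Dual R X →ₗ[R] Module.End R (ExteriorAlgebra R X) :=
  LinearMap.coprod (LinearMap.mul R _ ∘ₗ ExteriorAlgebra.ι R) CliffordAlgebra.contractLeft

theorem fermionOp_apply (z : X × Module.Dual R X) (x : ExteriorAlgebra R X) :
    fermionOp z x = ExteriorAlgebra.ι R z.1 * x + CliffordAlgebra.contractLeft z.2 x :=
  rfl

theorem fermionOp_mul_fermionOp (z z' : X × Module.Dual R X) :
    fermionOp z * fermionOp z' = -(fermionOp z' * fermionOp z) +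
      algebraMap R _ (z.2 z'.1 + z'.2 z.1) := by
  refine LinearMap.ext fun x => ?_
  have contract_ι_mul (f : Module.Dual R X) (a : X) (y : ExteriorAlgebra R X) :
      CliffordAlgebra.contractLeft f (ExteriorAlgebra.ι R a * y) =
        f a • y - ExteriorAlgebra.ι R a * CliffordAlgebra.contractLeft f y :=
    CliffordAlgebra.contractLeft_ι_mul f a y
  have ι_anticomm : ExteriorAlgebra.ι R z.1 * (ExteriorAlgebra.ι R z'.1 * x) =
      -(ExteriorAlgebra.ι R z'.1 * (ExteriorAlgebra.ι R z.1 * x)) := by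
    rw [← mul_assoc, ← mul_assoc, ← neg_mul,
      eq_neg_of_add_eq_zero_left (ExteriorAlgebra.ι_add_mul_swap z.1 z'.1)]
  have contract_anticomm : CliffordAlgebra.contractLeft z.2 (CliffordAlgebra.contractLeft z'.2 x) =
      -CliffordAlgebra.contractLeft z'.2 (CliffordAlgebra.contractLeft z.2 x) :=
    CliffordAlgebra.contractLeft_comm z.2 z'.2 x
  simp only [Module.End.mul_apply, LinearMap.add_apply, LinearMap.neg_apply, fermionOp_apply,
    map_add, contract_ι_mul, ι_anticomm, contract_anticomm, Module.algebraMap_end_apply]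
  abel

theorem fermionOp_one {z : X × Module.Dual R X} (hz : z.1 = 0) :
    fermionOp z (1 : ExteriorAlgebra R X) = 0 := by
  rw [fermionOp_apply, hz, map_zero, zero_mul, zero_add]
  exact CliffordAlgebra.contractLeft_one _ z.2

variable (R X ι) in
/-- The space of states `S(X) ⊗ Λ(X)` of bosons and fermions with one-particle space `X`. -/
abbrev BosonFermionSpace : Type _ := MvPolynomial ι R ⊗[R] ExteriorAlgebra R X

/-- The bosonic operators on `S(X) ⊗ Λ(X)`. -/
def bosonExt (b : Module.Basis ι R X) :
    X × Module.Dual R X →ₗ[R] Module.End R (BosonFermionSpace R X ι) :=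
  LinearMap.rTensorHom (ExteriorAlgebra R X) ∘ₗ bosonOp b

variable (ι) in
/-- The fermionic operators on `S(X) ⊗ Λ(X)`. No sign is inserted, so they commute with the
bosonic ones. -/
def fermionExt : X × Module.Dual R X →ₗ[R] Module.End R (BosonFermionSpace R X ι) :=
  LinearMap.lTensorHom (MvPolynomial ι R) ∘ₗ fermionOp

theorem bosonExt_mul_bosonExt (b : Module.Basis ι R X) (z z' : X × Module.Dual R X) :
    bosonExt b z * bosonExt b z' = bosonExt b z' * bosonExt b z +
      algebraMap R _ (z.2 z'.1 - z'.2 z.1) := by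
  refine (LinearMap.rTensor_mul _ _ _).symm.trans ?_
  rw [bosonOp_mul_bosonOp, LinearMap.rTensor_add, LinearMap.rTensor_mul,
    Algebra.algebraMap_eq_smul_one, LinearMap.rTensor_smul, Module.End.one_eq_id,
    LinearMap.rTensor_id]
  rfl

theorem fermionExt_mul_fermionExt (z z' : X × Module.Dual R X) :
    fermionExt ι z * fermionExt ι z' = -(fermionExt ι z' * fermionExt ι z) +
      algebraMap R _ (z.2 z'.1 + z'.2 z.1) := by
  refine (LinearMap.lTensor_mul _ _ _).symm.trans ?_
  rw [fermionOp_mul_fermionOp, LinearMap.lTensor_add, LinearMap.lTensor_neg, LinearMap.lTensor_mul,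
    Algebra.algebraMap_eq_smul_one, LinearMap.lTensor_smul, Module.End.one_eq_id,
    LinearMap.lTensor_id]
  rfl

theorem commute_bosonExt_fermionExt (b : Module.Basis ι R X) (z z' : X × Module.Dual R X) :
    Commute (bosonExt b z) (fermionExt ι z') :=
  (LinearMap.rTensor_comp_lTensor ..).trans (LinearMap.lTensor_comp_rTensor ..).symm

theorem bosonExt_one_tmul_one (b : Module.Basis ι R X) {z : X × Module.Dual R X} (hz : z.1 = 0) :
    bosonExt b z (1 ⊗ₜ 1) = 0 :=
  (congrArg (· ⊗ₜ[R] _) (bosonOp_one b hz)).trans (zero_tmul _ _)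

theorem fermionExt_one_tmul_one {z : X × Module.Dual R X} (hz : z.1 = 0) :
    fermionExt ι z (1 ⊗ₜ 1) = 0 :=
  (congrArg (_ ⊗ₜ[R] ·) (fermionOp_one hz)).trans (tmul_zero _ _)

end BosonFermion

namespace SuperSymplectic

open TensorProduct

section CommRing

variable {K P A ι : Type*} [CommRing K] [AddCommGroup P] [Module K P] [Ring A] [Algebra K A]
  {Ω : SuperSymplectic K P} {q : Module.End K P}

theorem IsPolarization.form_eq_sub (hq : Ω.IsPolarization q) (x y : P) :
    Ω.form x y = Ω.form x (q y) - Ω.form y (q (Ω.parity x)) :=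
  calc Ω.form x y = Ω.form (x - q x) y + Ω.form (q x) y := by
        rw [← LinearMap.add_apply, ← map_add, sub_add_cancel]
    _ = Ω.form x (q y) - Ω.form y (q (Ω.parity x)) := by
        rw [hq.form_sub_apply, Ω.form_swap (q x) y, ← sub_eq_add_neg, hq.map_parity]; rfl

theorem IsPolarization.form_eq_even_add_odd (hq : Ω.IsPolarization q) (x y : P) :
    Ω.form x y =
      (Ω.form (Ω.evenPart x) (q (Ω.evenPart y)) - Ω.form (Ω.evenPart y) (q (Ω.evenPart x))) +
        (Ω.form (Ω.oddPart x) (q (Ω.oddPart y)) + Ω.form (Ω.oddPart y) (q (Ω.oddPart x))) := by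
  have even (x y : P) : Ω.form (Ω.evenPart x) (q (Ω.evenPart y)) = Ω.form x (q (Ω.evenPart y)) := by
    rw [Ω.form_evenPart, ← hq.map_evenPart, Ω.evenPart_evenPart]
  have odd (x y : P) : Ω.form (Ω.oddPart x) (q (Ω.oddPart y)) = Ω.form x (q (Ω.oddPart y)) := by
    rw [Ω.form_oddPart, ← hq.map_oddPart, oddPart_of_odd (Ω.evenPart_oddPart y)]
  rw [hq.form_eq_sub, Ω.parity_apply, map_sub q, map_sub, even, even, odd, odd]
  nth_rw 1 [← Ω.evenPart_add_oddPart y]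
  rw [map_add q, map_add]
  ring

theorem IsPolarization.isRep_boson_add_fermion (hq : Ω.IsPolarization q) {B Φ : P →ₗ[K] A}
    (hB : ∀ x y, B x * B y = B y * B x + algebraMap K A (Ω.form x (q y) - Ω.form y (q x)))
    (hΦ : ∀ x y, Φ x * Φ y = -(Φ y * Φ x) + algebraMap K A (Ω.form x (q y) + Ω.form y (q x)))
    (hBΦ : ∀ x y, Commute (B x) (Φ y)) :
    Ω.IsRep (B ∘ₗ Ω.evenPart + Φ ∘ₗ Ω.oddPart) := by
  intro x y
  have parity_y : B (Ω.evenPart (Ω.parity y)) = B (Ω.evenPart y) ∧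
      Φ (Ω.oddPart (Ω.parity y)) = -Φ (Ω.oddPart y) := by
    simp only [parity_apply, map_sub, evenPart_evenPart, evenPart_oddPart,
      oddPart_of_even (Ω.evenPart_evenPart y), oddPart_of_odd (Ω.evenPart_oddPart y), sub_zero,
      zero_sub, map_neg, and_self]
  simp only [LinearMap.add_apply, LinearMap.comp_apply, evenPart_evenPart, evenPart_oddPart,
    oddPart_of_even (Ω.evenPart_evenPart x), oddPart_of_odd (Ω.evenPart_oddPart x), map_zero,
    add_zero, zero_add, parity_y, hq.form_eq_even_add_odd x y, map_add (algebraMap K A), mul_add,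
    add_mul, hB (Ω.evenPart x), hΦ (Ω.oddPart x), (hBΦ _ _).eq]
  noncomm_ring

/-- The action on the boson-fermion space determined by a polarization: creators act by
multiplication and annihilators by derivations or contractions. -/
def bosonFermionRep (Ω : SuperSymplectic K P) (q : Module.End K P) (b : Module.Basis ι K P) :
    P →ₗ[K] Module.End K (BosonFermionSpace K P ι) :=
  (bosonExt b ∘ₗ q.prod (Ω.form.compl₂ q)) ∘ₗ Ω.evenPart +
    (fermionExt ι ∘ₗ q.prod (Ω.form.compl₂ q)) ∘ₗ Ω.oddPart

theorem IsPolarization.isRep_bosonFermionRep (hq : Ω.IsPolarization q)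
    (b : Module.Basis ι K P) :
    Ω.IsRep (A := Module.End K (BosonFermionSpace K P ι)) (Ω.bosonFermionRep q b) := by
  refine hq.isRep_boson_add_fermion (fun x y => ?_) (fun x y => ?_)
    fun x y => commute_bosonExt_fermionExt b _ _
  · refine (bosonExt_mul_bosonExt b _ _).trans ?_
    change _ + algebraMap K _ (Ω.form x (q (q y)) - Ω.form y (q (q x))) = _
    rw [hq.apply_apply, hq.apply_apply]
    rfl
  · refine (fermionExt_mul_fermionExt _ _).trans ?_
    change _ + algebraMap K _ (Ω.form x (q (q y)) + Ω.form y (q (q x))) = _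
    rw [hq.apply_apply, hq.apply_apply]
    rfl

theorem IsPolarization.bosonFermionRep_vacuum (hq : Ω.IsPolarization q)
    (b : Module.Basis ι K P) {y : P} (hy : q y = 0) :
    Ω.bosonFermionRep q b y (1 ⊗ₜ 1) = 0 := by
  refine (congrArg₂ (· + ·) (bosonExt_one_tmul_one b ?_) (fermionExt_one_tmul_one ?_)).trans
    (add_zero 0)
  · exact (hq.map_evenPart y).trans (by rw [hy, map_zero])
  · exact (hq.map_oddPart y).trans (by rw [hy, map_zero])

end CommRing

end SuperSymplectic

section Gradings

theorem eigenspace_smul_mem {K P W F : Type*} [CommRing K] [AddCommGroup P] [Module K P] [Ring W]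
    [Algebra K W] [AddCommGroup F] [Module K F] [Module W F] [IsScalarTower K W F]
    {T : P →ₗ[K] W} {g : Module.End K P} {σ : Module.End K F}
    (hσ : ∀ x m, σ (T x • m) = T (g x) • σ m) {c d : K} {x : P} (hx : x ∈ g.eigenspace c) {m : F}
    (hm : m ∈ σ.eigenspace d) : T x • m ∈ σ.eigenspace (d * c) := by
  rw [Module.End.mem_eigenspace_iff] at hx hm ⊢
  rw [hσ, hx, hm, map_smul, smul_assoc, ← algebraMap_smul W d m, smul_smul, ← Algebra.commutes,
    mul_smul, algebraMap_smul, smul_smul, mul_comm]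

/- The component of degree `i` is the eigenspace of `σ` with eigenvalue `χ i`. -/
theorem exists_grading_of_addChar {ι K P W F : Type*} [AddMonoid ι] [DecidableEq ι] [Field K]
    [AddCommGroup P] [Module K P] [Ring W] [Algebra K W] [AddCommGroup F] [Module K F]
    [Module W F] [IsScalarTower K W F] {T : P →ₗ[K] W}
    (hgenW : Algebra.adjoin K (Set.range T) = ⊤) {v : F} (hgenF : Submodule.span W {v} = ⊤)
    {g : Module.End K P} {σ : Module.End K F} (hσ : ∀ x m, σ (T x • m) = T (g x) • σ m)
    (hσv : σ v = v) {χ : AddChar ι K} (hχ : Function.Injective χ)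
    (hg : ⨆ i, g.eigenspace (χ i) = ⊤) :
    ∃ G : ι → Submodule K F, DirectSum.IsInternal G ∧ v ∈ G 0 ∧
      ∀ i j, ∀ x ∈ g.eigenspace (χ j), ∀ m ∈ G i, T x • m ∈ G (i + j) := by
  have v_mem : v ∈ σ.eigenspace (χ 0) := by
    rw [Module.End.mem_eigenspace_iff, hσv, AddChar.map_zero_eq_one, one_smul]
  have smul_mem (i j : ι) (x : P) (hx : x ∈ g.eigenspace (χ j)) (m : F)
      (hm : m ∈ σ.eigenspace (χ i)) : T x • m ∈ σ.eigenspace (χ (i + j)) := by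
    rw [AddChar.map_add_eq_mul]
    exact eigenspace_smul_mem hσ hx hm
  refine ⟨fun i => σ.eigenspace (χ i), DirectSum.isInternal_submodule_of_iSupIndep_of_iSup_eq_top
    (σ.eigenspaces_iSupIndep.comp hχ) ?_, v_mem, smul_mem⟩
  refine eq_top_of_generators_smul_mem hgenW hgenF (Submodule.mem_iSup_of_mem 0 v_mem) ?_
  rintro _ ⟨x, rfl⟩ m hm
  induction hm using Submodule.iSup_induction' with
  | zero => simpa only [smul_zero] using zero_mem _
  | add m n _ _ hm hn => simpa only [smul_add] using add_mem hm hn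
  | mem i m hm =>
    have hx : x ∈ ⨆ j, g.eigenspace (χ j) := hg ▸ Submodule.mem_top
    induction hx using Submodule.iSup_induction' with
    | zero => simpa only [map_zero, zero_smul] using zero_mem _
    | add x y _ _ hx hy => simpa only [map_add, add_smul] using add_mem hx hy
    | mem j x hx => exact Submodule.mem_iSup_of_mem (i + j) (smul_mem i j x hx m hm)

/-- The endomorphism of the cyclic module `W ⧸ J` induced by an endomorphism of the algebra `W`
that preserves the left ideal `J`. -/
def quotientEnd {K W : Type*} [CommRing K] [Ring W] [Algebra K W] {J : Submodule W W}
    (τ : W →ₐ[K] W) (hτ : ∀ a ∈ J, τ a ∈ J) : Module.End K (W ⧸ J) :=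
  let σ := J.mapQ J (τ : W →+* W).toSemilinearMap hτ
  { toFun := σ
    map_add' := map_add σ
    map_smul' := fun c m => by
      rw [← algebraMap_smul W c m, map_smulₛₗ, RingHom.coe_coe, AlgHom.commutes,
        algebraMap_smul, RingHom.id_apply] }

theorem quotientEnd_mkQ {K W : Type*} [CommRing K] [Ring W] [Algebra K W] {J : Submodule W W}
    (τ : W →ₐ[K] W) (hτ : ∀ a ∈ J, τ a ∈ J) (a : W) :
    quotientEnd τ hτ (J.mkQ a) = J.mkQ (τ a) :=
  rfl

theorem quotientEnd_smul {K W : Type*} [CommRing K] [Ring W] [Algebra K W] {J : Submodule W W}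
    (τ : W →ₐ[K] W) (hτ : ∀ a ∈ J, τ a ∈ J) (a : W) (m : W ⧸ J) :
    quotientEnd τ hτ (a • m) = τ a • quotientEnd τ hτ m :=
  map_smulₛₗ (J.mapQ J (τ : W →+* W).toSemilinearMap hτ) a m

end Gradings

section Cotangent

variable {K V : Type*} [Field K] [AddCommGroup V] [Module K V] {e : Module.End K V}

namespace SuperSymplectic

/-- The supersymplectic space `V ⊕ V*` of a superspace `V`, given by its projection `e` onto the
even part. -/
def cotangent (he : ∀ v, e (e v) = e v) : SuperSymplectic K (V × Module.Dual K V) where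
  evenPart := e.prodMap e.dualMap
  form := (LinearMap.snd K V (Module.Dual K V)).compl₂ (LinearMap.fst K V _) -
    ((LinearMap.snd K V (Module.Dual K V)).compl₂
      ((e - (LinearMap.id - e)) ∘ₗ LinearMap.fst K V _)).flip
  evenPart_evenPart x := Prod.ext (he x.1) (LinearMap.ext fun v => congrArg x.2 (he v))
  form_evenPart x y := by
    change x.2 (e y.1) - y.2 (e (e x.1) - (e x.1 - e (e x.1))) =
      x.2 (e y.1) - y.2 (e (e x.1 - (x.1 - e x.1)))
    simp only [map_sub, he]
  form_swap x y := by
    change x.2 y.1 - y.2 (e x.1 - (x.1 - e x.1)) =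
      -(y.2 (e x.1 - (x.1 - e x.1)) - (x.2 (e (e y.1 - (y.1 - e y.1))) -
        (x.2 (e y.1 - (y.1 - e y.1)) - x.2 (e (e y.1 - (y.1 - e y.1))))))
    simp only [map_sub, he]
    ring
  separatingRight y hy := by
    refine Prod.ext ((Module.forall_dual_apply_eq_zero_iff K y.1).1 fun f => ?_)
      (LinearMap.ext fun v => ?_)
    · have := hy (0, f)
      change f y.1 - y.2 (e 0 - (0 - e 0)) = 0 at this
      simpa only [map_zero, sub_zero] using this
    · have involutive : e (e v - (v - e v)) - (e v - (v - e v) - e (e v - (v - e v))) = v := by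
        simp only [map_sub, he]
        abel
      have := hy (e v - (v - e v), 0)
      change 0 - y.2 (e (e v - (v - e v)) - (e v - (v - e v) - e (e v - (v - e v)))) = 0 at this
      rwa [involutive, zero_sub, neg_eq_zero] at this

theorem exists_isProj_comm (he : ∀ v, e (e v) = e v) {D : Submodule K V}
    (hD : ∀ v ∈ D, e v ∈ D) :
    ∃ p : Module.End K V, LinearMap.IsProj D p ∧ ∀ v, p (e v) = e (p v) := by
  obtain ⟨r, hr⟩ : ∃ r : Module.End K V, LinearMap.IsProj D r :=
    let ⟨C, hC⟩ := D.exists_isCompl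
    ⟨D.projection C hC, D.projection_apply_mem hC,
      fun v hv => D.projection_apply_left hC ⟨v, hv⟩⟩
  refine ⟨e * r * e + (1 - e) * r * (1 - e), ⟨fun v => ?_, fun v hv => ?_⟩, fun v => ?_⟩
  · exact D.add_mem (hD _ (hr.map_mem _)) (D.sub_mem (hr.map_mem _) (hD _ (hr.map_mem _)))
  · change e (r (e v)) + (r (v - e v) - e (r (v - e v))) = v
    rw [hr.map_id _ (hD v hv), hr.map_id _ (D.sub_mem hv (hD v hv)), map_sub, he, sub_self,
      sub_zero, add_sub_cancel]
  · change e (r (e (e v))) + (r (e v - e (e v)) - e (r (e v - e (e v)))) =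
      e (e (r (e v)) + (r (v - e v) - e (r (v - e v))))
    simp only [map_add, map_sub, he, sub_self, map_zero, add_zero]

theorem exists_isPolarization_cotangent (he : ∀ v, e (e v) = e v) {D : Submodule K V}
    (hD : ∀ v ∈ D, e v ∈ D) :
    ∃ q, (cotangent he).IsPolarization q ∧ ∀ y, q y = 0 ↔ y ∈ D.prod D.dualAnnihilator := by
  obtain ⟨p, ⟨p_mem, p_of_mem⟩, p_comm⟩ := exists_isProj_comm he hD
  have p_apply (v : V) : p (p v) = p v := p_of_mem _ (p_mem v)
  refine ⟨(LinearMap.id - p).prodMap p.dualMap, ⟨?_, fun x => ?_, fun x y => ?_⟩, fun y => ?_⟩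
  · refine LinearMap.ext fun x => Prod.ext ?_ (LinearMap.ext fun v => congrArg x.2 (p_apply v))
    change x.1 - p x.1 - p (x.1 - p x.1) = x.1 - p x.1
    rw [map_sub, p_apply, sub_self, sub_zero]
  · refine Prod.ext ?_ (LinearMap.ext fun v => congrArg x.2 (p_comm v).symm)
    change e x.1 - p (e x.1) = e (x.1 - p x.1)
    rw [map_sub, p_comm]
  · change x.2 (p y.1) - y.2 (e (x.1 - p x.1) - (x.1 - p x.1 - e (x.1 - p x.1))) =
      x.2 (y.1 - (y.1 - p y.1)) - (y.2 (e x.1 - (x.1 - e x.1)) - y.2 (p (e x.1 - (x.1 - e x.1))))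
    simp only [map_sub, p_comm, sub_sub_cancel]
    ring
  · have p_eq_iff : y.1 - p y.1 = 0 ↔ y.1 ∈ D :=
      sub_eq_zero.trans ⟨fun h => h ▸ p_mem _, fun h => (p_of_mem _ h).symm⟩
    have comp_eq_iff : y.2 ∘ₗ p = 0 ↔ y.2 ∈ D.dualAnnihilator := by
      rw [Submodule.mem_dualAnnihilator]
      exact ⟨fun h v hv => p_of_mem v hv ▸ LinearMap.congr_fun h v,
        fun h => LinearMap.ext fun v => h _ (p_mem v)⟩
    exact Prod.ext_iff.trans (and_congr p_eq_iff comp_eq_iff)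

end SuperSymplectic

end Cotangent

section WeylSuperalgebra

variable {Vs} {V0 V1 D : Submodule ℂ Vs}

theorem zmod_two_eq_zero_or_eq_one (ε : ZMod 2) : ε = 0 ∨ ε = 1 := by
  revert ε
  decide

theorem sgn_zero : sgn 0 = 1 := if_pos rfl

theorem sgn_one : sgn 1 = -1 := if_neg one_ne_zero

theorem sgn_add (ε η : ZMod 2) : sgn (ε + η) = sgn ε * sgn η := by
  rcases zmod_two_eq_zero_or_eq_one ε with rfl | rfl
  · rw [zero_add, sgn_zero, one_mul]
  · rcases zmod_two_eq_zero_or_eq_one η with rfl | rfl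
    · rw [add_zero, sgn_zero, mul_one]
    · rw [CharTwo.add_self_eq_zero, sgn_zero, sgn_one, neg_mul_neg, one_mul]

/-- The sign `(-1)^ε` as a character of `ℤ/2`. -/
def sgnChar : AddChar (ZMod 2) ℂ where
  toFun := sgn
  map_zero_eq_one' := sgn_zero
  map_add_eq_mul' := sgn_add

theorem sgnChar_injective : Function.Injective sgnChar := by
  have sgn_ne : sgn 1 ≠ sgn 0 := by
    rw [sgn_one, sgn_zero]
    norm_num
  intro ε η h
  rcases zmod_two_eq_zero_or_eq_one ε with rfl | rfl <;>
    rcases zmod_two_eq_zero_or_eq_one η with rfl | rfl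
  · rfl
  · exact absurd h.symm sgn_ne
  · exact absurd h sgn_ne
  · rfl

/-- The part of parity `ε` of the superspace `V ⊕ V*`. -/
def homog (V0 V1 : Submodule ℂ Vs) (ε : ZMod 2) : Submodule ℂ (Vs × Module.Dual ℂ Vs) :=
  (par Vs V0 V1 ε).prod (dpar Vs V0 V1 ε)

/-- The supersymplectic space `V ⊕ V*` of generators of the Weyl superalgebra. -/
def weylForm (hcompl : IsCompl V0 V1) : SuperSymplectic ℂ (Vs × Module.Dual ℂ Vs) :=
  .cotangent (e := V0.projection V1 hcompl)
    (LinearMap.congr_fun (Submodule.isIdempotentElem_projection hcompl))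

section Parity

variable (hcompl : IsCompl V0 V1)

theorem mem_homog_zero {x : Vs × Module.Dual ℂ Vs} :
    x ∈ homog V0 V1 0 ↔ (weylForm hcompl).evenPart x = x := by
  refine (and_congr ?_ ?_).trans Prod.ext_iff.symm
  · exact (V0.range_projection hcompl ▸ LinearMap.IsIdempotentElem.mem_range_iff
      (Submodule.isIdempotentElem_projection hcompl) :)
  · refine (Submodule.mem_dualAnnihilator _).trans
      ⟨fun h => LinearMap.ext fun v => ?_, fun h v hv => ?_⟩
    · exact (sub_eq_zero.1 ((map_sub x.2 _ _).symm.trans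
        (h _ (Submodule.sub_projection_mem hcompl v)))).symm
    · rw [← h]
      exact (congrArg x.2 ((Submodule.projection_apply_eq_zero_iff hcompl).2 hv)).trans
        (map_zero x.2)

theorem mem_homog_one {x : Vs × Module.Dual ℂ Vs} :
    x ∈ homog V0 V1 1 ↔ (weylForm hcompl).evenPart x = 0 := by
  refine (and_congr ?_ ?_).trans Prod.ext_iff.symm
  · exact (Submodule.projection_apply_eq_zero_iff hcompl).symm
  · refine (Submodule.mem_dualAnnihilator _).trans
      ⟨fun h => LinearMap.ext fun v => h _ (Submodule.projection_apply_mem hcompl v),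
        fun h v hv => ?_⟩
    exact (congrArg x.2 (V0.projection_apply_left hcompl ⟨v, hv⟩)).symm.trans
      (LinearMap.congr_fun h v)

theorem parity_of_mem_homog {ε : ZMod 2} {x : Vs × Module.Dual ℂ Vs} (hx : x ∈ homog V0 V1 ε) :
    (weylForm hcompl).parity x = sgn ε • x := by
  rcases zmod_two_eq_zero_or_eq_one ε with rfl | rfl
  · replace hx := (mem_homog_zero hcompl).1 hx
    rw [SuperSymplectic.parity_apply, hx, SuperSymplectic.oddPart_of_even hx, sub_zero, sgn_zero,
      one_smul]
  · replace hx := (mem_homog_one hcompl).1 hx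
    rw [SuperSymplectic.parity_apply, hx, SuperSymplectic.oddPart_of_odd hx, zero_sub, sgn_one,
      neg_one_smul]

theorem evenPart_mem_homog (x : Vs × Module.Dual ℂ Vs) :
    (weylForm hcompl).evenPart x ∈ homog V0 V1 0 :=
  (mem_homog_zero hcompl).2 (SuperSymplectic.evenPart_evenPart _ x)

theorem oddPart_mem_homog (x : Vs × Module.Dual ℂ Vs) :
    (weylForm hcompl).oddPart x ∈ homog V0 V1 1 :=
  (mem_homog_one hcompl).2 (SuperSymplectic.evenPart_oddPart _ x)

theorem weylForm_apply (x y : Vs × Module.Dual ℂ Vs) :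
    (weylForm hcompl).form x y = x.2 y.1 - y.2 ((weylForm hcompl).parity x).1 :=
  rfl

theorem weylForm_of_mem_homog {ε η : ZMod 2} {x y : Vs × Module.Dual ℂ Vs}
    (hx : x ∈ homog V0 V1 ε) (hy : y ∈ homog V0 V1 η) :
    (weylForm hcompl).form x y = x.2 y.1 - sgn (ε * η) * y.2 x.1 := by
  rw [weylForm_apply, parity_of_mem_homog hcompl hx, Prod.smul_fst, map_smul, smul_eq_mul]
  rcases zmod_two_eq_zero_or_eq_one ε with rfl | rfl
  · rw [zero_mul]
  rcases zmod_two_eq_zero_or_eq_one η with rfl | rfl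
  · have : y.2 x.1 = 0 := (Submodule.mem_dualAnnihilator _).1 hy.2 _ hx.1
    rw [this, mul_zero, mul_zero]
  · rw [one_mul]

variable {A : Type*} [Ring A] [Algebra ℂ A]

theorem isRep_weylForm_iff (T : Vs × Module.Dual ℂ Vs →ₗ[ℂ] A) :
    (weylForm hcompl).IsRep T ↔ ∀ ε η, ∀ x ∈ homog V0 V1 ε, ∀ y ∈ homog V0 V1 η,
      T x * T y = sgn (ε * η) • (T y * T x) +
        algebraMap ℂ A (x.2 y.1 - sgn (ε * η) * y.2 x.1) := by
  refine ⟨fun hT ε η x hx y hy => ?_, fun hT x y => ?_⟩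
  · rw [← weylForm_of_mem_homog hcompl hx hy]
    rcases zmod_two_eq_zero_or_eq_one ε with rfl | rfl
    · rw [hT.even_mul ((mem_homog_zero hcompl).1 hx), zero_mul, sgn_zero, one_smul]
    · rw [hT.odd_mul ((mem_homog_one hcompl).1 hx), parity_of_mem_homog hcompl hy, one_mul,
        map_smul, smul_mul_assoc]
  · have homogeneous {ε η : ZMod 2} {x y : Vs × Module.Dual ℂ Vs} (hx : x ∈ homog V0 V1 ε)
        (hy : y ∈ homog V0 V1 η) : T x * T y =
          sgn (ε * η) • (T y * T x) + algebraMap ℂ A ((weylForm hcompl).form x y) := by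
      rw [hT ε η x hx y hy, weylForm_of_mem_homog hcompl hx hy]
    have even_x := evenPart_mem_homog hcompl x
    have odd_x := oddPart_mem_homog hcompl x
    have even_y := evenPart_mem_homog hcompl y
    have odd_y := oddPart_mem_homog hcompl y
    have hx := (weylForm hcompl).evenPart_add_oddPart x
    have hy := (weylForm hcompl).evenPart_add_oddPart y
    rw [SuperSymplectic.parity_apply]
    generalize (weylForm hcompl).evenPart x = x₀ at *
    generalize (weylForm hcompl).oddPart x = x₁ at *
    generalize (weylForm hcompl).evenPart y = y₀ at *
    generalize (weylForm hcompl).oddPart y = y₁ at *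
    subst hx hy
    simp only [map_add, map_sub, add_mul, mul_add, sub_mul, LinearMap.add_apply,
      homogeneous even_x even_y, homogeneous even_x odd_y, homogeneous odd_x even_y,
      homogeneous odd_x odd_y, mul_zero, mul_one, sgn_zero, sgn_one, one_smul,
      neg_one_smul]
    abel

end Parity

/-- The generators of the Weyl superalgebra, as a linear map `V ⊕ V* → W_V`. -/
def weylGen (V0 V1 : Submodule ℂ Vs) : Vs × Module.Dual ℂ Vs →ₗ[ℂ] WeylSup Vs V0 V1 :=
  (RingQuot.mkAlgHom ℂ (WeylSupRel Vs V0 V1)).toLinearMap ∘ₗ TensorAlgebra.ι ℂ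

theorem weylGen_inl (v : Vs) : weylGen V0 V1 (v, 0) = wV Vs V0 V1 v := rfl

theorem weylGen_inr (φ : Module.Dual ℂ Vs) : weylGen V0 V1 (0, φ) = wF Vs V0 V1 φ := rfl

theorem weylGen_eq_add (x : Vs × Module.Dual ℂ Vs) :
    weylGen V0 V1 x = wV Vs V0 V1 x.1 + wF Vs V0 V1 x.2 := by
  rw [← weylGen_inl, ← weylGen_inr, ← map_add, Prod.mk_add_mk, add_zero, zero_add]

theorem isRep_weylGen (hcompl : IsCompl V0 V1) : (weylForm hcompl).IsRep (weylGen V0 V1) := by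
  refine (isRep_weylForm_iff hcompl _).2 fun ε η x hx y hy => ?_
  have vw : wV Vs V0 V1 x.1 * wV Vs V0 V1 y.1 =
      sgn (ε * η) • (wV Vs V0 V1 y.1 * wV Vs V0 V1 x.1) := by
    simpa only [map_mul, map_smul] using!
      RingQuot.mkAlgHom_rel ℂ (WeylSupRel.vw ε η x.1 y.1 hx.1 hy.1)
  have fg : wF Vs V0 V1 x.2 * wF Vs V0 V1 y.2 =
      sgn (ε * η) • (wF Vs V0 V1 y.2 * wF Vs V0 V1 x.2) := by
    simpa only [map_mul, map_smul] using!
      RingQuot.mkAlgHom_rel ℂ (WeylSupRel.fg ε η x.2 y.2 hx.2 hy.2)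
  have fv {ε η : ZMod 2} {x y : Vs × Module.Dual ℂ Vs} (hx : x ∈ homog V0 V1 ε)
      (hy : y ∈ homog V0 V1 η) : wF Vs V0 V1 x.2 * wV Vs V0 V1 y.1 =
        sgn (ε * η) • (wV Vs V0 V1 y.1 * wF Vs V0 V1 x.2) + algebraMap ℂ _ (x.2 y.1) := by
    simpa only [map_mul, map_smul, map_add, AlgHom.commutes] using!
      RingQuot.mkAlgHom_rel ℂ (WeylSupRel.fv ε η x.2 y.1 hx.2 hy.1)
  have sgn_mul_self : sgn (ε * η) * sgn (ε * η) = 1 := by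
    rw [← sgn_add, CharTwo.add_self_eq_zero, sgn_zero]
  simp only [weylGen_eq_add, mul_add, add_mul, vw, fg, fv hx hy, fv hy hx, mul_comm η ε, smul_add,
    smul_smul, sgn_mul_self, Algebra.algebraMap_eq_smul_one]
  module

theorem exists_algHom_of_isRep (hcompl : IsCompl V0 V1) {A : Type*} [Ring A] [Algebra ℂ A]
    {T : Vs × Module.Dual ℂ Vs →ₗ[ℂ] A} (hT : (weylForm hcompl).IsRep T) :
    ∃ ρ : WeylSup Vs V0 V1 →ₐ[ℂ] A, ∀ x, ρ (weylGen V0 V1 x) = T x := by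
  rw [isRep_weylForm_iff] at hT
  refine ⟨RingQuot.liftAlgHom ℂ ⟨TensorAlgebra.lift ℂ T, fun a b hab => ?_⟩, fun x => ?_⟩
  · induction hab with
    | vw ε η v w hv hw =>
      simpa [ιV] using hT ε η (v, 0) ⟨hv, zero_mem _⟩ (w, 0) ⟨hw, zero_mem _⟩
    | fg ε η φ ψ hφ hψ =>
      simpa [ιF] using hT ε η (0, φ) ⟨zero_mem _, hφ⟩ (0, ψ) ⟨zero_mem _, hψ⟩
    | fv ε η φ v hφ hv =>
      simpa [ιF, ιV] using hT ε η (0, φ) ⟨zero_mem _, hφ⟩ (v, 0) ⟨hv, zero_mem _⟩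
  · exact (RingQuot.liftAlgHom_mkAlgHom_apply ..).trans (TensorAlgebra.lift_ι_apply T x)

theorem adjoin_range_weylGen : Algebra.adjoin ℂ (Set.range (weylGen V0 V1)) = ⊤ := by
  rw [weylGen, LinearMap.coe_comp, Set.range_comp, AlgHom.coe_toLinearMap, ← AlgHom.map_adjoin,
    TensorAlgebra.adjoin_range_ι, Algebra.map_top]
  exact (AlgHom.range_eq_top _).2 (RingQuot.mkAlgHom_surjective ℂ _)

theorem idealJ_eq_span_weylGen : idealJ Vs V0 V1 D =
    Submodule.span _ (weylGen V0 V1 '' (D.prod D.dualAnnihilator)) := by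
  refine le_antisymm (Submodule.span_le.2 ?_) (Submodule.span_le.2 ?_)
  · rintro _ (⟨v, hv, rfl⟩ | ⟨φ, hφ, rfl⟩)
    · exact Submodule.subset_span ⟨(v, 0), ⟨hv, zero_mem _⟩, weylGen_inl v⟩
    · exact Submodule.subset_span ⟨(0, φ), ⟨zero_mem _, hφ⟩, weylGen_inr φ⟩
  · rintro _ ⟨x, hx, rfl⟩
    rw [weylGen_eq_add]
    exact add_mem (Submodule.subset_span (.inl ⟨_, hx.1, rfl⟩))
      (Submodule.subset_span (.inr ⟨_, hx.2, rfl⟩))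

theorem span_vacuum : Submodule.span (WeylSup Vs V0 V1) {(idealJ Vs V0 V1 D).mkQ 1} = ⊤ := by
  rw [← Set.image_singleton, ← Submodule.map_span, ← Ideal.span, Ideal.span_singleton_one,
    Submodule.map_top, Submodule.range_mkQ]

theorem weylGen_smul_vacuum {y : Vs × Module.Dual ℂ Vs} (hy : y ∈ D.prod D.dualAnnihilator) :
    weylGen V0 V1 y • (idealJ Vs V0 V1 D).mkQ 1 = 0 := by
  rw [← map_smul, smul_eq_mul, mul_one, Submodule.mkQ_apply, Submodule.Quotient.mk_eq_zero,
    idealJ_eq_span_weylGen]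
  exact Submodule.subset_span ⟨y, hy, rfl⟩

section Simplicity

variable (hcompl : IsCompl V0 V1) (hD : D = D ⊓ V0 ⊔ D ⊓ V1)
include hcompl hD

theorem projection_mem : ∀ v ∈ D, V0.projection V1 hcompl v ∈ D := by
  intro v hv
  rw [hD] at hv
  obtain ⟨a, ha, b, hb, rfl⟩ := Submodule.mem_sup.1 hv
  have map_a : V0.projection V1 hcompl a = a := V0.projection_apply_left hcompl ⟨a, ha.2⟩
  rw [map_add, map_a, (V0.projection_apply_eq_zero_iff hcompl).2 hb.2, add_zero]
  exact ha.1

theorem exists_isPolarization_weylForm : ∃ q, (weylForm hcompl).IsPolarization q ∧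
    ∀ y, q y = 0 ↔ y ∈ D.prod D.dualAnnihilator :=
  SuperSymplectic.exists_isPolarization_cotangent _ (projection_mem hcompl hD)

theorem vacuum_ne_zero : (idealJ Vs V0 V1 D).mkQ 1 ≠ 0 := by
  obtain ⟨q, hq, hqD⟩ := exists_isPolarization_weylForm hcompl hD
  let b := Module.Basis.ofVectorSpace ℂ (Vs × Module.Dual ℂ Vs)
  obtain ⟨ρ, hρ⟩ := exists_algHom_of_isRep hcompl (hq.isRep_bosonFermionRep b)
  have kills : ∀ a ∈ idealJ Vs V0 V1 D, ρ a 1 = 0 := by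
    intro a ha
    rw [idealJ_eq_span_weylGen] at ha
    induction ha using Submodule.span_induction with
    | mem a ha =>
      obtain ⟨y, hy, rfl⟩ := ha
      rw [hρ]
      exact hq.bosonFermionRep_vacuum b ((hqD y).2 hy)
    | zero => rw [map_zero, LinearMap.zero_apply]
    | add a b _ _ ha hb => rw [map_add, LinearMap.add_apply, ha, hb, add_zero]
    | smul c a _ ha => rw [smul_eq_mul, map_mul, Module.End.mul_apply, ha, map_zero]
  intro h
  have := kills 1 ((Submodule.Quotient.mk_eq_zero _).1 h)
  rw [map_one ρ, Module.End.one_apply] at this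
  exact one_ne_zero this

theorem isSimpleModule_fockSup : IsSimpleModule (WeylSup Vs V0 V1) (FockSup Vs V0 V1 D) :=
  let ⟨_, hq, hqD⟩ := exists_isPolarization_weylForm hcompl hD
  (isRep_weylGen hcompl).isSimpleModule adjoin_range_weylGen span_vacuum hq
    (fun y hy => weylGen_smul_vacuum ((hqD y).1 hy)) (vacuum_ne_zero hcompl hD)

theorem eq_zero_of_wV_smul_eq_zero {v : Vs} (hv : v ∈ V0) (hvD : v ∉ D)
    {m : FockSup Vs V0 V1 D} (hm : wV Vs V0 V1 v • m = 0) : m = 0 :=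
  let ⟨_, hq, hqD⟩ := exists_isPolarization_weylForm hcompl hD
  (isRep_weylGen hcompl).eq_zero_of_even_smul_eq_zero adjoin_range_weylGen span_vacuum hq
    (fun y hy => weylGen_smul_vacuum ((hqD y).1 hy))
    ((mem_homog_zero hcompl (x := (v, 0))).1 ⟨hv, zero_mem _⟩) (fun h => hvD ((hqD _).1 h).1) hm

theorem inf_le_inf_of_linearEquiv {D' : Submodule ℂ Vs} (hD' : D' = D' ⊓ V0 ⊔ D' ⊓ V1)
    (f : FockSup Vs V0 V1 D ≃ₗ[WeylSup Vs V0 V1] FockSup Vs V0 V1 D') : D' ⊓ V0 ≤ D ⊓ V0 := by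
  refine fun v hv => ⟨by_contra fun hvD => vacuum_ne_zero hcompl hD' ?_, hv.2⟩
  have vacuum_killed : wV Vs V0 V1 v • (idealJ Vs V0 V1 D').mkQ 1 = 0 :=
    weylGen_smul_vacuum (y := (v, 0)) ⟨hv.1, zero_mem _⟩
  refine f.symm.map_eq_zero_iff.1 (eq_zero_of_wV_smul_eq_zero hcompl hD hv.2 hvD ?_)
  rw [← map_smul, vacuum_killed, map_zero]

end Simplicity

/-- The character `z ↦ 2 ^ z` of `ℤ`; any number that is not a root of unity would do in place
of `2`. -/
def twoZPow : AddChar ℤ ℂ where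
  toFun z := 2 ^ z
  map_zero_eq_one' := zpow_zero 2
  map_add_eq_mul' := zpow_add₀ two_ne_zero

theorem twoZPow_injective : Function.Injective twoZPow := fun y z h => by
  have : (2 : ℝ) ^ y = 2 ^ z := by simpa [twoZPow] using congrArg norm h
  exact zpow_right_injective₀ two_pos (by norm_num) this

/-- The scaling of `V ⊕ V*` by `2` on `V` and `1/2` on `V*`. -/
def degreeScaling (Vs : Type) [AddCommGroup Vs] [Module ℂ Vs] :
    Module.End ℂ (Vs × Module.Dual ℂ Vs) :=
  ((2 : ℂ) • LinearMap.id).prodMap ((2⁻¹ : ℂ) • LinearMap.id)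

section FockGradings

variable (hcompl : IsCompl V0 V1)
include hcompl

theorem exists_end_fockSup {g : Module.End ℂ (Vs × Module.Dual ℂ Vs)}
    (hg_even : ∀ x, g ((weylForm hcompl).evenPart x) = (weylForm hcompl).evenPart (g x))
    (hg_form : ∀ x y, (weylForm hcompl).form (g x) (g y) = (weylForm hcompl).form x y)
    (hgD : ∀ x ∈ D.prod D.dualAnnihilator, g x ∈ D.prod D.dualAnnihilator) :
    ∃ σ : Module.End ℂ (FockSup Vs V0 V1 D),
      (∀ x m, σ (weylGen V0 V1 x • m) = weylGen V0 V1 (g x) • σ m) ∧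
      σ ((idealJ Vs V0 V1 D).mkQ 1) = (idealJ Vs V0 V1 D).mkQ 1 := by
  obtain ⟨τ, hτ⟩ := exists_algHom_of_isRep hcompl ((isRep_weylGen hcompl).comp hg_even hg_form)
  have τ_mem : ∀ a ∈ idealJ Vs V0 V1 D, τ a ∈ idealJ Vs V0 V1 D := by
    have : idealJ Vs V0 V1 D ≤
        (idealJ Vs V0 V1 D).comap (τ : WeylSup Vs V0 V1 →+* WeylSup Vs V0 V1).toSemilinearMap := by
      nth_rw 1 [idealJ_eq_span_weylGen]
      refine Submodule.span_le.2 ?_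
      rintro _ ⟨x, hx, rfl⟩
      change τ (weylGen V0 V1 x) ∈ idealJ Vs V0 V1 D
      rw [hτ, idealJ_eq_span_weylGen]
      exact Submodule.subset_span ⟨g x, hgD x hx, rfl⟩
    exact this
  refine ⟨quotientEnd τ τ_mem, fun x m => ?_, ?_⟩
  · rw [quotientEnd_smul, hτ, LinearMap.comp_apply]
  · rw [quotientEnd_mkQ, map_one]

theorem exists_grading_fockSup {ι : Type*} [AddMonoid ι] [DecidableEq ι]
    {g : Module.End ℂ (Vs × Module.Dual ℂ Vs)}
    (hg_even : ∀ x, g ((weylForm hcompl).evenPart x) = (weylForm hcompl).evenPart (g x))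
    (hg_form : ∀ x y, (weylForm hcompl).form (g x) (g y) = (weylForm hcompl).form x y)
    (hgD : ∀ x ∈ D.prod D.dualAnnihilator, g x ∈ D.prod D.dualAnnihilator)
    {χ : AddChar ι ℂ} (hχ : Function.Injective χ) (hg : ⨆ i, g.eigenspace (χ i) = ⊤) :
    ∃ G : ι → Submodule ℂ (FockSup Vs V0 V1 D), DirectSum.IsInternal G ∧
      (idealJ Vs V0 V1 D).mkQ 1 ∈ G 0 ∧
      ∀ i j, ∀ x ∈ g.eigenspace (χ j), ∀ m ∈ G i, weylGen V0 V1 x • m ∈ G (i + j) := by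
  obtain ⟨σ, hσ, hσv⟩ := exists_end_fockSup hcompl hg_even hg_form hgD
  exact exists_grading_of_addChar (T := weylGen V0 V1) (σ := σ) adjoin_range_weylGen span_vacuum
    hσ hσv hχ hg

theorem degreeScaling_evenPart (x : Vs × Module.Dual ℂ Vs) :
    degreeScaling Vs ((weylForm hcompl).evenPart x) =
      (weylForm hcompl).evenPart (degreeScaling Vs x) :=
  Prod.ext (map_smul (V0.projection V1 hcompl) 2 x.1).symm rfl

theorem weylForm_degreeScaling (x y : Vs × Module.Dual ℂ Vs) :
    (weylForm hcompl).form (degreeScaling Vs x) (degreeScaling Vs y) =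
      (weylForm hcompl).form x y := by
  have pairing_scaling (φ : Module.Dual ℂ Vs) (v : Vs) : ((2⁻¹ : ℂ) • φ) ((2 : ℂ) • v) = φ v := by
    rw [LinearMap.smul_apply, map_smul, inv_smul_smul₀ two_ne_zero]
  have parity_scaling : (weylForm hcompl).parity (degreeScaling Vs x) =
      degreeScaling Vs ((weylForm hcompl).parity x) := by
    simp only [SuperSymplectic.parity_apply, SuperSymplectic.oddPart_apply, map_sub,
      degreeScaling_evenPart]
  rw [weylForm_apply, weylForm_apply, parity_scaling]
  exact congrArg₂ (· - ·) (pairing_scaling x.2 y.1) (pairing_scaling y.2 _)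

theorem exists_int_grading_fockSup :
    ∃ G : ℤ → Submodule ℂ (FockSup Vs V0 V1 D),
      DirectSum.IsInternal G ∧ (idealJ Vs V0 V1 D).mkQ 1 ∈ G 0 ∧
      (∀ (z : ℤ) (v : Vs), ∀ x ∈ G z, wV Vs V0 V1 v • x ∈ G (z + 1)) ∧
      (∀ (z : ℤ) (φ : Module.Dual ℂ Vs), ∀ x ∈ G z, wF Vs V0 V1 φ • x ∈ G (z - 1)) := by
  have inl_mem (v : Vs) : (v, 0) ∈ (degreeScaling Vs).eigenspace (twoZPow 1) := by
    rw [Module.End.mem_eigenspace_iff]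
    exact Prod.ext (congrArg (· • v) (zpow_one (2 : ℂ)).symm)
      ((smul_zero (2⁻¹ : ℂ)).trans (smul_zero (twoZPow 1)).symm)
  have inr_mem (φ : Module.Dual ℂ Vs) : (0, φ) ∈ (degreeScaling Vs).eigenspace (twoZPow (-1)) := by
    rw [Module.End.mem_eigenspace_iff]
    exact Prod.ext ((smul_zero (2 : ℂ)).trans (smul_zero (twoZPow (-1))).symm)
      (congrArg (· • φ) (zpow_neg_one (2 : ℂ)).symm)
  have iSup_eigenspace : ⨆ z, (degreeScaling Vs).eigenspace (twoZPow z) = ⊤ := by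
    refine top_unique fun x _ => ?_
    rw [← Prod.fst_add_snd x]
    exact add_mem (Submodule.mem_iSup_of_mem 1 (inl_mem x.1))
      (Submodule.mem_iSup_of_mem (-1) (inr_mem x.2))
  obtain ⟨G, hG, hG0, hGsmul⟩ := exists_grading_fockSup (D := D) hcompl
    (degreeScaling_evenPart hcompl) (weylForm_degreeScaling hcompl)
    (fun x hx => ⟨D.smul_mem 2 hx.1, Submodule.smul_mem _ 2⁻¹ hx.2⟩) twoZPow_injective
    iSup_eigenspace
  exact ⟨G, hG, hG0, fun z v => hGsmul z 1 _ (inl_mem v), fun z φ => hGsmul z (-1) _ (inr_mem φ)⟩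

theorem exists_parity_grading_fockSup (hD : D = D ⊓ V0 ⊔ D ⊓ V1) :
    ∃ P : ZMod 2 → Submodule ℂ (FockSup Vs V0 V1 D),
      DirectSum.IsInternal P ∧ (idealJ Vs V0 V1 D).mkQ 1 ∈ P 0 ∧
      (∀ (ε μ : ZMod 2) (v : Vs), v ∈ par Vs V0 V1 ε →
        ∀ x ∈ P μ, wV Vs V0 V1 v • x ∈ P (μ + ε)) ∧
      (∀ (ε μ : ZMod 2) (φ : Module.Dual ℂ Vs), φ ∈ dpar Vs V0 V1 ε →
        ∀ x ∈ P μ, wF Vs V0 V1 φ • x ∈ P (μ + ε)) := by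
  have homog_le (ε : ZMod 2) :
      homog V0 V1 ε ≤ (weylForm hcompl).parity.eigenspace (sgnChar ε) := fun x hx =>
    Module.End.mem_eigenspace_iff.2 (parity_of_mem_homog hcompl hx)
  have iSup_eigenspace : ⨆ ε, (weylForm hcompl).parity.eigenspace (sgnChar ε) = ⊤ := by
    refine top_unique fun x _ => ?_
    rw [← (weylForm hcompl).evenPart_add_oddPart x]
    exact add_mem (Submodule.mem_iSup_of_mem 0 (homog_le 0 (evenPart_mem_homog hcompl x)))
      (Submodule.mem_iSup_of_mem 1 (homog_le 1 (oddPart_mem_homog hcompl x)))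
  have parity_mem (x) (hx : x ∈ D.prod D.dualAnnihilator) :
      (weylForm hcompl).parity x ∈ D.prod D.dualAnnihilator := by
    have evenPart_mem : (weylForm hcompl).evenPart x ∈ D.prod D.dualAnnihilator :=
      ⟨projection_mem hcompl hD _ hx.1, (Submodule.mem_dualAnnihilator _).2 fun v hv =>
        (Submodule.mem_dualAnnihilator _).1 hx.2 _ (projection_mem hcompl hD v hv)⟩
    exact sub_mem evenPart_mem (sub_mem hx evenPart_mem)
  obtain ⟨P, hP, hP0, hPsmul⟩ := exists_grading_fockSup hcompl
    (weylForm hcompl).parity_evenPart (weylForm hcompl).form_parity_parity parity_mem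
    sgnChar_injective iSup_eigenspace
  exact ⟨P, hP, hP0, fun ε μ v hv => hPsmul μ ε _ (homog_le ε ⟨hv, zero_mem _⟩),
    fun ε μ φ hφ => hPsmul μ ε _ (homog_le ε ⟨zero_mem _, hφ⟩)⟩

end FockGradings

end WeylSuperalgebra

/-- Lemma 2.2 of the paper: for every sub superspace `D` of `V = V₀ ⊕ V₁`, the mixed Fock
space `F_V(D) = W_V/J(D)` is a simple left `W_V`-module carrying a `ℤ`-grading and a
`ℤ/2`-grading inherited from `W_V`; and `F_V(D) ≇ F_V(D')` whenever the even parts differ,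
`D ⊓ V₀ ≠ D' ⊓ V₀`. -/
theorem mixed_fock_space_simple_graded_nonisomorphic
    (V0 V1 : Submodule ℂ Vs) (hcompl : IsCompl V0 V1)
    (D : Submodule ℂ Vs) (hD : D = D ⊓ V0 ⊔ D ⊓ V1) :
    -- F_V(D) is a simple W_V-module:
    IsSimpleModule (WeylSup Vs V0 V1) (FockSup Vs V0 V1 D) ∧
    -- F_V(D) is ℤ-graded, with the grading inherited from the ℤ-grading of W_V
    -- (deg V = 1, deg V* = -1, the vacuum [1] in degree 0):
    (∃ G : ℤ → Submodule ℂ (FockSup Vs V0 V1 D),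
      DirectSum.IsInternal G ∧
      (idealJ Vs V0 V1 D).mkQ 1 ∈ G 0 ∧
      (∀ (z : ℤ) (v : Vs), ∀ x ∈ G z, wV Vs V0 V1 v • x ∈ G (z + 1)) ∧
      (∀ (z : ℤ) (φ : Module.Dual ℂ Vs), ∀ x ∈ G z, wF Vs V0 V1 φ • x ∈ G (z - 1))) ∧
    -- F_V(D) is ℤ/2-graded, with the parity inherited from W_V
    -- (the vacuum [1] even, homogeneous generators acting by their parity):
    (∃ P : ZMod 2 → Submodule ℂ (FockSup Vs V0 V1 D),
      DirectSum.IsInternal P ∧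
      (idealJ Vs V0 V1 D).mkQ 1 ∈ P 0 ∧
      (∀ (ε μ : ZMod 2) (v : Vs), v ∈ par Vs V0 V1 ε →
        ∀ x ∈ P μ, wV Vs V0 V1 v • x ∈ P (μ + ε)) ∧
      (∀ (ε μ : ZMod 2) (φ : Module.Dual ℂ Vs), φ ∈ dpar Vs V0 V1 ε →
        ∀ x ∈ P μ, wF Vs V0 V1 φ • x ∈ P (μ + ε))) ∧
    -- Fock spaces with mixing sets having different even parts are non-isomorphic:
    (∀ D' : Submodule ℂ Vs, D' = D' ⊓ V0 ⊔ D' ⊓ V1 → D ⊓ V0 ≠ D' ⊓ V0 →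
      IsEmpty ((FockSup Vs V0 V1 D) ≃ₗ[WeylSup Vs V0 V1] (FockSup Vs V0 V1 D'))) := by
  refine ⟨isSimpleModule_fockSup hcompl hD, exists_int_grading_fockSup hcompl,
    exists_parity_grading_fockSup hcompl hD, fun D' hD' hne => ⟨fun f => hne ?_⟩⟩
  exact le_antisymm (inf_le_inf_of_linearEquiv hcompl hD' hD f.symm)
    (inf_le_inf_of_linearEquiv hcompl hD hD' f)
end
end

section
/- Let g = gl(m|n), u = ⊕_{1≤i≤m, m+1≤j≤m+n} ℂE_{ij}, V = ℂ^{m|n}, A = ℂ[x_{ij} : 1≤i≤m, m+1≤j≤m+n], and let δ act on A ⊗ V by δ(Σ_i f_i v_i) = Σ_{i=1}^m (Σ_{j=m+1}^{m+n} x_{ij} f_j) v_i. Then ker δ = A v_1 + ⋯ + A v_m + K_1, where K_1 = {Σ_{j=m+1}^{m+n} f_j v_j : Σ_{j} x_{ij} f_j = 0 for all 1 ≤ i ≤ m}; im δ = Σ_{j=m+1}^{m+n} A·(Σ_{i=1}^m x_{ij} v_i); hence the standard u-cohomology is H^*(u,V) = (A v_1 + ⋯ + A v_m) / (Σ_j A(Σ_i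 x_{ij} v_i)) ⊕ K_1; and K_1 = 0 if and only if m ≥ n. -/
/-!
STATEMENT 10: standard `u`-cohomology of `gl(m|n)` with coefficients in the natural module
`V = ℂ^{m|n}`, for the parabolic with Levi `gl_m ⊕ gl_n` and nilradical
`u = ⊕_{i ≤ m < j} ℂ E_{ij}`.

The cochain space is `C(u,V) = A ⊗ V` where `A = ℂ[x_{ij}]`, realized concretely as
`M = (Fin m ⊕ Fin n) → A` (the coordinates of `V` in the basis `v_1,…,v_{m+n}`, where
`inl i ↔ v_i` (`i ≤ m`, even) and `inr j ↔ v_{m+j}` (odd)).  The differential acts by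
`δ(Σ f_i v_i) = Σ_{i ≤ m} (Σ_j x_{ij} f_{m+j}) v_i`.
-/

noncomputable section

open MvPolynomial

/-- `A = ℂ[x_{ij} : i ∈ Fin m, j ∈ Fin n]`. -/
abbrev PolyA (m n : ℕ) : Type := MvPolynomial (Fin m × Fin n) ℂ

/-- The cochain space `C(u, V) = A ⊗ V`, realized as coordinate vectors. -/
abbrev CochainA (m n : ℕ) : Type := (Fin m ⊕ Fin n) → PolyA m n

variable (m n : ℕ)

/-- The differential `δ(Σ_i f_i v_i) = Σ_{i ∈ I₀} (Σ_{j ∈ I₁} x_{ij} f_j) v_i`. -/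
noncomputable def deltaA : CochainA m n →ₗ[PolyA m n] CochainA m n :=
  LinearMap.pi fun s =>
    Sum.elim
      (fun i => ∑ j : Fin n, (MvPolynomial.X (i, j) : PolyA m n) •
        (LinearMap.proj (Sum.inr j) : CochainA m n →ₗ[PolyA m n] PolyA m n))
      (fun _ => 0) s

/-- The submodule `A v_1 + ⋯ + A v_m`. -/
def evenPartA : Submodule (PolyA m n) (CochainA m n) where
  carrier := {f | ∀ j : Fin n, f (Sum.inr j) = 0}
  add_mem' := by intro a b ha hb j; simp [ha j, hb j]
  zero_mem' := by intro j; simp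
  smul_mem' := by intro c a ha j; simp [ha j]

/-- `K₁ = {Σ_{j ∈ I₁} f_j v_j : Σ_j x_{ij} f_j = 0 for all i ∈ I₀}`. -/
def KoneA : Submodule (PolyA m n) (CochainA m n) where
  carrier := {f | (∀ i : Fin m, f (Sum.inl i) = 0) ∧
    ∀ i : Fin m, ∑ j : Fin n, MvPolynomial.X (i, j) * f (Sum.inr j) = 0}
  add_mem' := by
    rintro a b ⟨ha1, ha2⟩ ⟨hb1, hb2⟩
    refine ⟨fun i => by simp [ha1 i, hb1 i], fun i => ?_⟩
    simp only [Pi.add_apply, mul_add, Finset.sum_add_distrib, ha2 i, hb2 i, add_zero]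
  zero_mem' := ⟨fun i => rfl, fun i => by simp⟩
  smul_mem' := by
    rintro c a ⟨ha1, ha2⟩
    refine ⟨fun i => by simp [ha1 i], fun i => ?_⟩
    have : ∑ j : Fin n, MvPolynomial.X (i, j) * (c • a) (Sum.inr j)
        = c * ∑ j : Fin n, MvPolynomial.X (i, j) * a (Sum.inr j) := by
      rw [Finset.mul_sum]; congr 1; funext j; simp [smul_eq_mul]; ring
    rw [this, ha2 i, mul_zero]

/-- The inclusion `(f_j)_{j ∈ I₁} ↦ Σ_j f_j v_j` of the odd coordinates. -/
noncomputable def oddInclA : (Fin n → PolyA m n) →ₗ[PolyA m n] CochainA m n :=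
  LinearMap.pi fun s =>
    Sum.elim (fun _ => (0 : (Fin n → PolyA m n) →ₗ[PolyA m n] PolyA m n))
      (fun j => LinearMap.proj j) s

/-!
Writing a cochain as a pair `(f₀, f₁)` of an even and an odd part, `δ` is the square-zero block
operator `(f₀, f₁) ↦ (X f₁, 0)`, where `X = (x_{ij})` is the generic `m × n` matrix. Its kernel
contains the even part, so by the modular law it is the direct sum of the even part and the odd
cocycles `K₁ ≅ ker X`; since the image lies in the even part, the quotient splits accordingly.

If `n ≤ m`, then an `n × n` submatrix of `X` is again a generic matrix, so its determinant is
nonzero and `X` is injective over the domain `A`. Conversely, an injective linear map `Aⁿ → Aᵐ`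
over a nontrivial commutative ring forces `n ≤ m`.
-/

section DirectSumQuotient

variable {R M : Type*} [Ring R] [AddCommGroup M] [Module R M] {p q b : Submodule R M}

lemma add_mem_iff_of_disjoint (hpq : Disjoint p q) (hb : b ≤ p) {x y : M} (hx : x ∈ p)
    (hy : y ∈ q) : x + y ∈ b ↔ x ∈ b ∧ y = 0 := by
  refine ⟨fun hxy => ?_, fun ⟨hxb, hy0⟩ => by rwa [hy0, add_zero]⟩
  have hyp : y ∈ p := (p.add_mem_iff_right hx).1 (hb hxy)
  have hy0 : y = 0 := Submodule.disjoint_def.1 hpq y hyp hy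
  exact ⟨by rwa [hy0, add_zero] at hxy, hy0⟩

/-- The quotient `(p ⊕ q) / b ≃ p / b × q` of an internal direct sum by a submodule of its first
summand. The sum is a variable `z` so that it may be given in another form, such as a kernel. -/
def quotientSupEquivProd {z : Submodule R M} (hz : p ⊔ q = z) (hpq : Disjoint p q) (hb : b ≤ p) :
    (z ⧸ b.comap z.subtype) ≃ₗ[R] (p ⧸ b.comap p.subtype) × q :=
  let sumMap : p × q →ₗ[R] z ⧸ b.comap z.subtype := (b.comap z.subtype).mkQ ∘ₗ
    (Submodule.inclusion (le_sup_left.trans hz.le)).coprod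
      (Submodule.inclusion (le_sup_right.trans hz.le))
  let projMap : p × q →ₗ[R] (p ⧸ b.comap p.subtype) × q :=
    (b.comap p.subtype).mkQ.prodMap LinearMap.id
  have sumMap_surjective : Function.Surjective sumMap := by
    refine (Submodule.mkQ_surjective _).comp ?_
    rintro ⟨w, hw⟩
    obtain ⟨x, hx, y, hy, rfl⟩ := Submodule.mem_sup.1 (hz ▸ hw)
    exact ⟨(⟨x, hx⟩, ⟨y, hy⟩), rfl⟩
  have projMap_surjective : Function.Surjective projMap :=
    (Submodule.mkQ_surjective _).prodMap Function.surjective_id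
  have ker_eq : LinearMap.ker sumMap = LinearMap.ker projMap := by
    ext ⟨⟨x, hx⟩, ⟨y, hy⟩⟩
    have mem_ker_sumMap : ((⟨x, hx⟩, ⟨y, hy⟩) : p × q) ∈ LinearMap.ker sumMap ↔ x + y ∈ b :=
      Submodule.Quotient.mk_eq_zero _
    have mem_ker_projMap :
        ((⟨x, hx⟩, ⟨y, hy⟩) : p × q) ∈ LinearMap.ker projMap ↔ x ∈ b ∧ y = 0 := by
      simp [projMap]
    rw [mem_ker_sumMap, mem_ker_projMap, add_mem_iff_of_disjoint hpq hb hx hy]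
  (sumMap.quotKerEquivOfSurjective sumMap_surjective).symm ≪≫ₗ
    Submodule.quotEquivOfEq _ _ ker_eq ≪≫ₗ
    projMap.quotKerEquivOfSurjective projMap_surjective

end DirectSumQuotient

section BlockDifferential

/-- The vectors supported on the even coordinates `I`. -/
def evenPart (R I J : Type*) [Semiring R] : Submodule R (I ⊕ J → R) :=
  LinearMap.ker (LinearMap.funLeft R R Sum.inr)

/-- The vectors supported on the odd coordinates `J`. -/
def oddPart (R I J : Type*) [Semiring R] : Submodule R (I ⊕ J → R) :=
  LinearMap.ker (LinearMap.funLeft R R Sum.inl)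

lemma mem_evenPart {R I J : Type*} [Semiring R] {f : I ⊕ J → R} :
    f ∈ evenPart R I J ↔ f ∘ Sum.inr = 0 := Iff.rfl

lemma mem_oddPart {R I J : Type*} [Semiring R] {f : I ⊕ J → R} :
    f ∈ oddPart R I J ↔ f ∘ Sum.inl = 0 := Iff.rfl

lemma isCompl_evenPart_oddPart (R I J : Type*) [Semiring R] :
    IsCompl (evenPart R I J) (oddPart R I J) := by
  constructor
  · rw [Submodule.disjoint_def]
    intro f hf_even hf_odd
    rw [← Sum.elim_comp_inl_inr f, mem_oddPart.1 hf_odd, mem_evenPart.1 hf_even,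
      Sum.elim_zero_zero]
  · rw [Submodule.codisjoint_iff_exists_add_eq]
    intro f
    refine ⟨Sum.elim (f ∘ Sum.inl) 0, Sum.elim 0 (f ∘ Sum.inr), rfl, rfl, ?_⟩
    rw [← Sum.elim_add_add, add_zero, zero_add, Sum.elim_comp_inl_inr]

variable {R I J : Type*} [Fintype I] [Fintype J]

section CommSemiring

variable [CommSemiring R] (X : Matrix I J R)

/-- The square-zero operator `(f₀, f₁) ↦ (X f₁, 0)`. For the generic matrix `X` this is the
differential `δ` of the `u`-cohomology with coefficients in the natural module. -/
def blockDifferential : (I ⊕ J → R) →ₗ[R] I ⊕ J → R :=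
  (Matrix.fromBlocks 0 X 0 0).mulVecLin

/-- The cocycles supported on the odd coordinates, written `K₁` in the case of `δ`. -/
def oddCocycles : Submodule R (I ⊕ J → R) :=
  oddPart R I J ⊓ LinearMap.ker (blockDifferential X)

lemma blockDifferential_apply (f : I ⊕ J → R) :
    blockDifferential X f = Sum.elim (X.mulVec (f ∘ Sum.inr)) 0 := by
  simp [blockDifferential, Matrix.fromBlocks_mulVec]

lemma mem_ker_blockDifferential {f : I ⊕ J → R} :
    f ∈ LinearMap.ker (blockDifferential X) ↔ X.mulVec (f ∘ Sum.inr) = 0 := by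
  rw [LinearMap.mem_ker, blockDifferential_apply, ← Sum.elim_zero_zero, Sum.elim_eq_iff,
    and_iff_left rfl]

lemma evenPart_le_ker_blockDifferential :
    evenPart R I J ≤ LinearMap.ker (blockDifferential X) := fun f hf => by
  rw [mem_ker_blockDifferential, mem_evenPart.1 hf, Matrix.mulVec_zero]

lemma range_blockDifferential_le_evenPart :
    LinearMap.range (blockDifferential X) ≤ evenPart R I J := by
  rintro _ ⟨f, rfl⟩
  rw [mem_evenPart, blockDifferential_apply, Sum.elim_comp_inr]

lemma range_blockDifferential :
    LinearMap.range (blockDifferential X) =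
      Submodule.span R (Set.range fun j => Sum.elim (X.col j) 0) := by
  have col_eq : (Matrix.fromBlocks 0 X 0 0 : Matrix (I ⊕ J) (I ⊕ J) R).col =
      Sum.elim (fun _ => 0) fun j => Sum.elim (X.col j) 0 := by
    ext (_ | _) (_ | _) <;> rfl
  have span_zero_cols :
      Submodule.span R (Set.range fun _ : I => (0 : I ⊕ J → R)) = ⊥ :=
    Submodule.span_eq_bot.2 fun _ ⟨_, h⟩ => h.symm
  rw [blockDifferential, Matrix.range_mulVecLin, col_eq, Set.Sum.elim_range,
    Submodule.span_union, span_zero_cols, bot_sup_eq]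

lemma oddCocycles_eq_bot_iff : oddCocycles X = ⊥ ↔ LinearMap.ker X.mulVecLin = ⊥ := by
  rw [LinearMap.ker_eq_bot', Submodule.eq_bot_iff]
  constructor
  · intro h v hv
    have h_odd : (Sum.elim 0 v : I ⊕ J → R) ∈ oddCocycles X :=
      ⟨rfl, (mem_ker_blockDifferential X).2 hv⟩
    exact congrArg (· ∘ Sum.inr) (h _ h_odd)
  · rintro h f ⟨hf_odd, hf_ker⟩
    rw [← Sum.elim_comp_inl_inr f, mem_oddPart.1 hf_odd,
      h _ ((mem_ker_blockDifferential X).1 hf_ker), Sum.elim_zero_zero]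

end CommSemiring

variable [CommRing R] (X : Matrix I J R)

lemma evenPart_sup_oddCocycles :
    evenPart R I J ⊔ oddCocycles X = LinearMap.ker (blockDifferential X) := by
  rw [oddCocycles, ← sup_inf_assoc_of_le _ (evenPart_le_ker_blockDifferential X),
    (isCompl_evenPart_oddPart R I J).sup_eq_top, top_inf_eq]

/-- The cohomology of `blockDifferential X` is the cokernel of `X` plus the odd cocycles. -/
def blockCohomologyEquiv :
    (↥(LinearMap.ker (blockDifferential X)) ⧸
        (LinearMap.range (blockDifferential X)).comap
          (LinearMap.ker (blockDifferential X)).subtype) ≃ₗ[R]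
      (↥(evenPart R I J) ⧸
        (LinearMap.range (blockDifferential X)).comap (evenPart R I J).subtype) ×
        ↥(oddCocycles X) :=
  quotientSupEquivProd (evenPart_sup_oddCocycles X)
    ((isCompl_evenPart_oddPart R I J).disjoint.mono_right inf_le_left)
    (range_blockDifferential_le_evenPart X)

end BlockDifferential

section GenericMatrix

variable {k I J : Type*} [CommRing k] [IsDomain k] [Fintype J]

lemma ker_mvPolynomialX_mulVecLin_eq_bot_of_embedding (e : J ↪ I) :
    LinearMap.ker (Matrix.mvPolynomialX I J k).mulVecLin = ⊥ := by
  classical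
  let N : Matrix J J (MvPolynomial (I × J) k) := (Matrix.mvPolynomialX I J k).submatrix e id
  have hN : N = (rename (R := k) (Prod.map e id)).mapMatrix (Matrix.mvPolynomialX J J k) := by
    ext1 i j
    simp [N]
  have rename_inj : Function.Injective (rename (R := k) (Prod.map e (id : J → J))) :=
    rename_injective _ (e.injective.prodMap Function.injective_id)
  have det_ne_zero : N.det ≠ 0 := by
    rw [hN, ← AlgHom.map_det]
    exact (map_ne_zero_iff _ rename_inj).2 (Matrix.det_mvPolynomialX_ne_zero J k)
  rw [LinearMap.ker_eq_bot']
  intro v hv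
  exact Matrix.eq_zero_of_mulVec_eq_zero det_ne_zero (congrArg (· ∘ e) hv)

lemma ker_mvPolynomialX_mulVecLin_eq_bot_iff [Fintype I] :
    LinearMap.ker (Matrix.mvPolynomialX I J k).mulVecLin = ⊥ ↔
      Fintype.card J ≤ Fintype.card I := by
  constructor
  · intro h
    exact card_le_of_injective _ _ (LinearMap.ker_eq_bot.1 h)
  · intro h
    obtain ⟨e⟩ := Function.Embedding.nonempty_of_card_le h
    exact ker_mvPolynomialX_mulVecLin_eq_bot_of_embedding e

end GenericMatrix

theorem standard_u_cohomology_glmn_natural_general {k I J : Type*} [CommRing k] [IsDomain k]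
    [Fintype I] [Fintype J] :
    let δ := blockDifferential (Matrix.mvPolynomialX I J k)
    let E := evenPart (MvPolynomial (I × J) k) I J
    let K := oddCocycles (Matrix.mvPolynomialX I J k)
    LinearMap.ker δ = E ⊔ K ∧
    LinearMap.range δ =
      Submodule.span (MvPolynomial (I × J) k)
        (Set.range fun j => Sum.elim (fun i => MvPolynomial.X (i, j)) fun _ => 0) ∧
    LinearMap.range δ ≤ E ∧
    (K = ⊥ ↔ Fintype.card J ≤ Fintype.card I) ∧
    Nonempty
      ((↥(LinearMap.ker δ) ⧸ (LinearMap.range δ).comap (LinearMap.ker δ).subtype)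
        ≃ₗ[MvPolynomial (I × J) k]
       (↥E ⧸ (LinearMap.range δ).comap E.subtype) × ↥K) :=
  ⟨(evenPart_sup_oddCocycles _).symm, range_blockDifferential _,
    range_blockDifferential_le_evenPart _,
    (oddCocycles_eq_bot_iff _).trans ker_mvPolynomialX_mulVecLin_eq_bot_iff,
    ⟨blockCohomologyEquiv _⟩⟩

lemma deltaA_eq_blockDifferential :
    deltaA m n = blockDifferential (Matrix.mvPolynomialX (Fin m) (Fin n) ℂ) := by
  refine LinearMap.ext fun f => ?_
  rw [blockDifferential_apply]
  ext1 (_ | _) <;> simp [deltaA, Matrix.mulVec, dotProduct]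

lemma evenPartA_eq_evenPart : evenPartA m n = evenPart (PolyA m n) (Fin m) (Fin n) :=
  Submodule.ext fun _ => funext_iff.symm

lemma KoneA_eq_oddCocycles :
    KoneA m n = oddCocycles (Matrix.mvPolynomialX (Fin m) (Fin n) ℂ) :=
  Submodule.ext fun _ => and_congr funext_iff.symm
    (funext_iff.symm.trans
      (mem_ker_blockDifferential (Matrix.mvPolynomialX (Fin m) (Fin n) ℂ)).symm)

/-- Standard `u`-cohomology of `gl(m|n)` on the natural module (Section 4.1.1 of the paper):
`ker δ = (A v_1 + ⋯ + A v_m) + K₁`, `im δ = Σ_{j ∈ I₁} A (Σ_{i ∈ I₀} x_{ij} v_i)`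
(equivalently, `im δ = δ(odd coordinate vectors)`), `K₁ = 0` iff `m ≥ n`, and consequently
`H^*(u,V) ≅ (A v_1 + ⋯ + A v_m)/im δ ⊕ K₁`. -/
theorem standard_u_cohomology_glmn_natural :
    LinearMap.ker (deltaA m n) = evenPartA m n ⊔ KoneA m n ∧
    LinearMap.range (deltaA m n) =
      Submodule.span (PolyA m n)
        (Set.range fun j : Fin n =>
          (Sum.elim (fun i => (MvPolynomial.X (i, j) : PolyA m n)) fun _ => 0 : CochainA m n)) ∧
    LinearMap.range (deltaA m n) ≤ evenPartA m n ∧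
    (KoneA m n = ⊥ ↔ n ≤ m) ∧
    Nonempty
      ((↥(LinearMap.ker (deltaA m n)) ⧸
          (LinearMap.range (deltaA m n)).comap (LinearMap.ker (deltaA m n)).subtype)
        ≃ₗ[PolyA m n]
       (↥(evenPartA m n) ⧸ (LinearMap.range (deltaA m n)).comap (evenPartA m n).subtype)
         × ↥(KoneA m n)) := by
  rw [deltaA_eq_blockDifferential, evenPartA_eq_evenPart, KoneA_eq_oddCocycles]
  simpa only [Fintype.card_fin] using
    standard_u_cohomology_glmn_natural_general (k := ℂ) (I := Fin m) (J := Fin n)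
end
end

section
/- Let A = ℂ[x_{ij} : 1 ≤ i ≤ m, 1 ≤ j ≤ n] be the polynomial ring in mn commuting variables over ℂ. The A-module of solutions (f_1, …, f_n) ∈ A^n of the system of equations Σ_{j=1}^n x_{ij} f_j = 0 for all i = 1, …, m is the zero module if and only if m ≥ n. -/
/-!
STATEMENT 11: Let `A = ℂ[x_{ij} : 1 ≤ i ≤ m, 1 ≤ j ≤ n]` be the polynomial ring in `m*n`
commuting variables.  The `A`-module of solutions `(f_1, …, f_n) ∈ A^n` of the system
`Σ_j x_{ij} f_j = 0` (for all `i = 1, …, m`) is the zero module iff `m ≥ n`.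

We formalize the solution module as the kernel of the `A`-linear map `A^n → A^m` given by
multiplication by the generic matrix `X = (x_{ij})`.
-/

/-!
If the kernel vanishes, then `A^n` embeds `A`-linearly into `A^m`, and `n ≤ m` because a nontrivial
commutative ring satisfies the strong rank condition. Conversely, if `n ≤ m`, the minor of `X` on
any `n` rows is not a zero divisor, so these rows alone already annihilate no nonzero vector. Over
an arbitrary commutative ring of coefficients this is seen by adding a new variable `T` to the
diagonal entries of the chosen block `M`: the substitution is injective, as `T = 0` undoes it, and
it sends `det M` to the characteristic polynomial `det (T + M)` of `-M`, which is monic in `T`.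
-/

noncomputable section

open MvPolynomial

/-- The polynomial algebra `ℂ[x_{ij}]` on the entries of a generic `m × n` matrix. -/
abbrev GenPolyAlg (m n : ℕ) : Type := MvPolynomial (Fin m × Fin n) ℂ

/-- The `A`-linear map `A^n → A^m`, `(f_j)_j ↦ (Σ_j x_{ij} f_j)_i`, i.e. multiplication by the
generic matrix `X = (x_{ij})`. -/
noncomputable def genericMatrixMul (m n : ℕ) :
    (Fin n → GenPolyAlg m n) →ₗ[GenPolyAlg m n] (Fin m → GenPolyAlg m n) :=
  LinearMap.pi fun i =>
    ∑ j : Fin n, (MvPolynomial.X (i, j) : GenPolyAlg m n) • (LinearMap.proj j : (Fin n → GenPolyAlg m n) →ₗ[GenPolyAlg m n] GenPolyAlg m n)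

section Shift

variable {m n : Type*} (R : Type*) [CommSemiring R]

/-- The substitution `x_{ij} ↦ x_{ij} + δ_{i, e j} T` into the polynomial ring in one further
variable `T`. It moves the generic matrix by `T` along the square block with rows `e j`, which turns
the minor on these rows into a characteristic polynomial. -/
def shiftAlong [DecidableEq m] (e : n → m) :
    MvPolynomial (m × n) R →ₐ[R] Polynomial (MvPolynomial (m × n) R) :=
  aeval fun p => Polynomial.C (X p) + if p.1 = e p.2 then Polynomial.X else 0

theorem shiftAlong_X [DecidableEq m] (e : n → m) (i : m) (j : n) :
    shiftAlong R e (X (i, j)) =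
      Polynomial.C (X (i, j)) + if i = e j then Polynomial.X else 0 :=
  aeval_X _ _

theorem shiftAlong_injective [DecidableEq m] (e : n → m) :
    Function.Injective (shiftAlong R e) := by
  let evalZero : Polynomial (MvPolynomial (m × n) R) →ₐ[R] MvPolynomial (m × n) R :=
    (Polynomial.aeval 0).restrictScalars R
  have evalZero_comp : evalZero.comp (shiftAlong R e) = AlgHom.id R _ := by
    ext ⟨i, j⟩ : 1
    simp [evalZero, shiftAlong_X, apply_ite]
  exact Function.LeftInverse.injective (DFunLike.congr_fun evalZero_comp)

end Shift

section GenericMatrix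

variable {m n : Type*} (R : Type*) [CommRing R]

theorem shiftAlong_mapMatrix_submatrix_eq_charmatrix [DecidableEq m] [Fintype n] [DecidableEq n]
    (e : n ↪ m) :
    (shiftAlong R e).mapMatrix ((Matrix.mvPolynomialX m n R).submatrix e id) =
      Matrix.charmatrix (-(Matrix.mvPolynomialX m n R).submatrix e id) := by
  ext i j : 1
  by_cases hij : i = j <;> simp [shiftAlong_X, hij, add_comm]

theorem det_submatrix_mvPolynomialX_mem_nonZeroDivisors [Fintype n] [DecidableEq n] (e : n ↪ m) :
    ((Matrix.mvPolynomialX m n R).submatrix e id).det ∈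
      nonZeroDivisors (MvPolynomial (m × n) R) := by
  classical
  refine mem_nonZeroDivisors_of_injective (shiftAlong_injective R e) ?_
  rw [AlgHom.map_det, shiftAlong_mapMatrix_submatrix_eq_charmatrix]
  exact (Matrix.charpoly_monic _).mem_nonZeroDivisors

theorem mvPolynomialX_mulVec_injective [Fintype n] (e : n ↪ m) :
    Function.Injective (Matrix.mvPolynomialX m n R).mulVec := by
  classical
  have rows_mulVec : (· ∘ e) ∘ (Matrix.mvPolynomialX m n R).mulVec =
      ((Matrix.mvPolynomialX m n R).submatrix e id).mulVec := rfl
  refine Function.Injective.of_comp (f := (· ∘ e)) ?_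
  rw [rows_mulVec]
  exact Matrix.mulVec_injective_of_det_mem_nonZeroDivisors
    (det_submatrix_mvPolynomialX_mem_nonZeroDivisors R e)

end GenericMatrix

theorem genericMatrixMul_eq_mulVecLin (m n : ℕ) :
    genericMatrixMul m n = (Matrix.mvPolynomialX (Fin m) (Fin n) ℂ).mulVecLin := by
  refine LinearMap.ext fun f => funext fun i => ?_
  simp [genericMatrixMul, Matrix.mulVec, dotProduct]

theorem kernel_of_generic_matrix_eq_bot_iff_general (m n R : Type*) [Fintype m] [Fintype n]
    [CommRing R] [Nontrivial R] :
    LinearMap.ker (Matrix.mvPolynomialX m n R).mulVecLin = ⊥ ↔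
      Fintype.card n ≤ Fintype.card m := by
  rw [LinearMap.ker_eq_bot]
  constructor
  · exact card_le_of_injective (MvPolynomial (m × n) R) _
  · intro card_le
    obtain ⟨e⟩ := Function.Embedding.nonempty_of_card_le card_le
    exact mvPolynomialX_mulVec_injective R e

/-- The module of solutions `(f_1,…,f_n)` of `Σ_j x_{ij} f_j = 0` (for all `i`) over the
polynomial ring `A = ℂ[x_{ij}]` is zero if and only if `m ≥ n`. -/
theorem kernel_of_generic_matrix_eq_bot_iff (m n : ℕ) :
    LinearMap.ker (genericMatrixMul m n) = ⊥ ↔ n ≤ m := by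
  rw [genericMatrixMul_eq_mulVecLin, kernel_of_generic_matrix_eq_bot_iff_general, Fintype.card_fin,
    Fintype.card_fin]
end
end

section
/- Let u = ⊕_{1≤i≤m, m+1≤j≤m+n} ℂE_{ij} ⊂ gl(m|n) and K = K_λ a Kac module, and consider the mixed u-cohomology with mixing set D = Πu*, computed on the cochain space ℂ[y_{ij}, E_{ij}] ⊗ K̄^0_λ with y_{ij} = ∂/∂x_{ij} (dual Fock space). Define e = Σ_{i,j} E_{ij} ∂/∂y_{ij}, f = Σ_{i,j} y_{ij} ∂/∂E_{ij}, h_1 = Σ E_{ij}∂/∂E_{ij}, h_2 = Σ y_{ij}∂/∂y_{ij}. Then these operators give a gl(1|1)-action with ef + fe = h_1 + h_2, the differential is δ = −e ⊗ id, and the mixed cohomology is H^0_{Πu*}(u, K) ≅ K̄^0_λ and H^{−i}_{Πu*}(u, K) = 0 for all i > 0. -/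
set_option synthInstance.maxHeartbeats 1000000
set_option maxHeartbeats 1000000

/-!
STATEMENT 17: mixed `u`-cohomology of a Kac module `K = K_λ` of `gl(m|n)` for the mixing set
`D = Πu*` (dual Fock space).  The cochain space is `ℂ[y_{ij}, E_{ij}] ⊗ K̄⁰_λ` with
`y_{ij} = ∂/∂x_{ij}`.  The operators
`e = Σ E_{ij} ∂/∂y_{ij}`, `f = Σ y_{ij} ∂/∂E_{ij}`,
`h₁ = Σ E_{ij}∂/∂E_{ij}`, `h₂ = Σ y_{ij}∂/∂y_{ij}`
give a `gl(1|1)`-action with `ef + fe = h₁ + h₂`; the differential is `δ = -e ⊗ id`, and the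
mixed cohomology is `H⁰_{Πu*}(u,K) ≅ K̄⁰_λ`, `H^{-i}_{Πu*}(u,K) = 0` for `i > 0`
(the `ℤ`-degree of an element of `y`-degree `i` being `-i`).
-/

noncomputable section

open MvPolynomial TensorProduct

/-- `ℂ[y_{ij}]`, the dual Fock space. -/
abbrev PolyY (m n : ℕ) : Type := MvPolynomial (Fin m × Fin n) ℂ

/-- The Grassmann algebra `ℂ[E_{ij}]`. -/
abbrev GrassY (m n : ℕ) : Type := ExteriorAlgebra ℂ ((Fin m × Fin n) → ℂ)

/-- `R = ℂ[y_{ij}, E_{ij}]`. -/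
abbrev SuperRY (m n : ℕ) : Type := PolyY m n ⊗[ℂ] GrassY m n

variable (m n : ℕ) (K0 : Type) [AddCommGroup K0] [Module ℂ K0]

/-- The cochain space `C_{Πu*}(u, K) = ℂ[y_{ij}, E_{ij}] ⊗ K̄⁰_λ`. -/
abbrev CochainY (m n : ℕ) (K0 : Type) [AddCommGroup K0] [Module ℂ K0] : Type :=
  SuperRY m n ⊗[ℂ] K0

/-- The odd generator `E_{ij}`. -/
noncomputable def EgenY (ij : Fin m × Fin n) : GrassY m n :=
  ExteriorAlgebra.ι ℂ (Pi.single ij 1)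

/-- The odd superderivation `∂/∂E_{ij}` (left contraction). -/
noncomputable def EderY (ij : Fin m × Fin n) : GrassY m n →ₗ[ℂ] GrassY m n :=
  CliffordAlgebra.contractLeft (LinearMap.proj ij)

/-- `e = Σ_{ij} E_{ij} ∂/∂y_{ij}`. -/
noncomputable def opEY : SuperRY m n →ₗ[ℂ] SuperRY m n :=
  ∑ ij : Fin m × Fin n,
    TensorProduct.map (MvPolynomial.pderiv ij).toLinearMap
      (LinearMap.mulLeft ℂ (EgenY m n ij))

/-- `f = Σ_{ij} y_{ij} ∂/∂E_{ij}`. -/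
noncomputable def opFY : SuperRY m n →ₗ[ℂ] SuperRY m n :=
  ∑ ij : Fin m × Fin n,
    TensorProduct.map (LinearMap.mulLeft ℂ (MvPolynomial.X ij)) (EderY m n ij)

/-- `h₁ = Σ_{ij} E_{ij} ∂/∂E_{ij}`. -/
noncomputable def opH1Y : SuperRY m n →ₗ[ℂ] SuperRY m n :=
  ∑ ij : Fin m × Fin n,
    TensorProduct.map LinearMap.id
      ((LinearMap.mulLeft ℂ (EgenY m n ij)).comp (EderY m n ij))

/-- `h₂ = Σ_{ij} y_{ij} ∂/∂y_{ij}`. -/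
noncomputable def opH2Y : SuperRY m n →ₗ[ℂ] SuperRY m n :=
  ∑ ij : Fin m × Fin n,
    TensorProduct.map
      ((LinearMap.mulLeft ℂ (MvPolynomial.X ij)).comp (MvPolynomial.pderiv ij).toLinearMap)
      LinearMap.id

/-- The differential `δ = -e ⊗ id` on `C_{Πu*}(u,K)`. -/
noncomputable def deltaY : CochainY m n K0 →ₗ[ℂ] CochainY m n K0 :=
  TensorProduct.map (-opEY m n) LinearMap.id

/-- The `y`-degree-`i` subspace of `C_{Πu*}(u,K)` (of `ℤ`-degree `-i`):
the `i`-eigenspace of the number operator `h₂ ⊗ id`. -/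
noncomputable def CdegY (i : ℕ) : Submodule ℂ (CochainY m n K0) where
  carrier := {c | TensorProduct.map (opH2Y m n) LinearMap.id c = ((i : ℕ) : ℂ) • c}
  add_mem' := by
    intro a b ha hb
    simp only [Set.mem_setOf_eq] at *
    rw [map_add, ha, hb, smul_add]
  zero_mem' := by simp
  smul_mem' := by
    intro c a ha
    simp only [Set.mem_setOf_eq] at *
    rw [map_smul, ha, smul_comm]

/-- The space of cocycles of `ℤ`-degree `-i`. -/
noncomputable def cocyclesY (i : ℕ) : Submodule ℂ (CochainY m n K0) :=
  LinearMap.ker (deltaY m n K0) ⊓ CdegY m n K0 i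

/-!
Read `E_{ij}` as the differential of `y_{ij}`.  Then `e` is the exterior derivative on polynomial
forms, `f` is contraction with the Euler vector field, and `ef + fe = h₁ + h₂ =: N` is Cartan's
formula for the Lie derivative along that field.  So the cohomology is given by the algebraic
Poincaré lemma: every form is a constant plus eigenvectors of `N` with eigenvalue
(form degree + polynomial degree) `≠ 0`.  On the span of the latter `N` is invertible and commutes
with `e`, so a closed element of it is `N y` with `y` closed, hence exact: `N y = e (f y)`.
Consequently the exact forms are precisely the closed forms with zero constant term.
A form of polynomial degree `i > 0` has zero constant term, and in degree `0` the constant term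
is the isomorphism `H⁰ ≅ K0`.
-/

section Eigenspaces

variable {F M : Type*} [Field F] [AddCommGroup M] [Module F M]

lemma ker_inf_iSup_eigenspace_le_range {e f N : Module.End F M} (he : e * e = 0)
    (hN : e * f + f * e = N) :
    LinearMap.ker e ⊓ ⨆ (μ : F) (_ : μ ≠ 0), N.eigenspace μ ≤ LinearMap.range e := by
  have commute : Commute e N := by
    rw [← hN, commute_iff_eq, mul_add, add_mul, ← mul_assoc, he, zero_mul, zero_add,
      mul_assoc f, he, mul_zero, add_zero, mul_assoc]
  set U := ⨆ (μ : F) (_ : μ ≠ 0), N.eigenspace μ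
  have e_mem : U ≤ U.comap e := iSup₂_le fun μ hμ x hx ↦
    Submodule.mem_iSup_of_mem μ <| Submodule.mem_iSup_of_mem hμ <|
      Module.End.mapsTo_genEigenspace_of_comm commute.symm μ 1 hx
  have le_map : U ≤ U.map N := iSup₂_le fun μ hμ x hx ↦ by
    refine ⟨μ⁻¹ • x, U.smul_mem _ (Submodule.mem_iSup_of_mem μ
      (Submodule.mem_iSup_of_mem hμ hx)), ?_⟩
    rw [map_smul, Module.End.mem_eigenspace_iff.mp hx, inv_smul_smul₀ hμ]
  have eq_zero {z : M} (hz : z ∈ U) (hNz : N z = 0) : z = 0 :=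
    Submodule.disjoint_def.mp (N.eigenspaces_iSupIndep 0) z
      (Module.End.mem_eigenspace_iff.mpr (by rw [hNz, zero_smul])) hz
  rintro x ⟨hx, hxU⟩
  obtain ⟨y, hyU, rfl⟩ := le_map hxU
  have y_closed : e y = 0 := eq_zero (e_mem hyU) <| by
    rw [← Module.End.mul_apply, ← commute.eq]
    exact hx
  refine ⟨f y, ?_⟩
  rw [← hN, LinearMap.add_apply, Module.End.mul_apply, Module.End.mul_apply, y_closed, map_zero,
    add_zero]

end Eigenspaces

lemma pderiv_pderiv_comm {ι R : Type*} [CommSemiring R] (a b : ι) (p : MvPolynomial ι R) :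
    pderiv a (pderiv b p) = pderiv b (pderiv a p) := by
  classical
  induction p using MvPolynomial.induction_on with
  | C r => simp only [pderiv_C, map_zero]
  | add p q hp hq => simp only [map_add, hp, hq]
  | mul_X p c hp =>
    simp only [pderiv_mul, pderiv_X, Pi.single_apply, map_add, apply_ite (pderiv _), map_zero,
      pderiv_one, hp, ite_self, mul_zero, add_zero]
    ring

/-- Polynomial differential forms on affine space: polynomials in variables `X a`, tensored with
the exterior algebra on the differentials of the variables. -/
abbrev PolyForm (ι R : Type*) [CommRing R] : Type _ :=
  MvPolynomial ι R ⊗[R] ExteriorAlgebra R (ι → R)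

namespace PolyForm

@[elab_as_elim]
lemma homogeneous_induction {ι R : Type*} [CommRing R] {motive : PolyForm ι R → Prop}
    (c : PolyForm ι R)
    (tmul : ∀ (s : ι →₀ ℕ) (r : R) (k : ℕ) (w : ExteriorAlgebra R (ι → R)),
      w ∈ ⋀[R]^k (ι → R) → motive (monomial s r ⊗ₜ w))
    (add : ∀ b c, motive b → motive c → motive (b + c)) : motive c := by
  have zero : motive 0 := by
    simpa using tmul 0 0 0 0 (Submodule.zero_mem _)
  induction c using TensorProduct.induction_on with
  | zero => exact zero
  | add b c hb hc => exact add b c hb hc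
  | tmul p w =>
    induction p using MvPolynomial.induction_on' with
    | add p q hp hq =>
      rw [add_tmul]
      exact add _ _ hp hq
    | monomial s r =>
      refine DirectSum.Decomposition.inductionOn (fun k : ℕ ↦ ⋀[R]^k (ι → R))
        (motive := fun w ↦ motive (monomial s r ⊗ₜ w)) ?_ ?_ ?_ w
      · rwa [tmul_zero]
      · exact fun w ↦ tmul s r _ w w.2
      · intro w w' hw hw'
        rw [tmul_add]
        exact add _ _ hw hw'

section ExteriorAlgebra

variable {ι : Type*} (R : Type*) [CommRing R]

/-- The differential of the variable `X a`, a generator of the exterior algebra. -/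
def dX [DecidableEq ι] (a : ι) : ExteriorAlgebra R (ι → R) :=
  ExteriorAlgebra.ι R (Pi.single a 1)

/-- Contraction with the coordinate vector field `∂/∂X a`. -/
def contract (a : ι) : ExteriorAlgebra R (ι → R) →ₗ[R] ExteriorAlgebra R (ι → R) :=
  CliffordAlgebra.contractLeft (LinearMap.proj a)

variable {R}

lemma contract_one (a : ι) : contract R a 1 = 0 :=
  CliffordAlgebra.contractLeft_one ..

lemma contract_ι_mul (a : ι) (v : ι → R) (w : ExteriorAlgebra R (ι → R)) :
    contract R a (ExteriorAlgebra.ι R v * w) =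
      v a • w - ExteriorAlgebra.ι R v * contract R a w :=
  CliffordAlgebra.contractLeft_ι_mul ..

variable [DecidableEq ι]

lemma contract_dX_mul (a b : ι) (w : ExteriorAlgebra R (ι → R)) :
    contract R a (dX R b * w) = (if b = a then w else 0) - dX R b * contract R a w := by
  rw [dX, contract_ι_mul, Pi.single_apply, ite_smul, one_smul, zero_smul]
  simp only [eq_comm]

lemma dX_mul_ι_mul (a : ι) (v : ι → R) (w : ExteriorAlgebra R (ι → R)) :
    dX R a * (ExteriorAlgebra.ι R v * w) = -(ExteriorAlgebra.ι R v * (dX R a * w)) := by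
  rw [← mul_assoc, ← mul_assoc, ← neg_mul, dX,
    eq_neg_of_add_eq_zero_left (ExteriorAlgebra.ι_add_mul_swap _ v)]

lemma dX_mul_dX_mul_self (a : ι) (w : ExteriorAlgebra R (ι → R)) :
    dX R a * (dX R a * w) = 0 := by
  rw [← mul_assoc, dX, ExteriorAlgebra.ι_sq_zero, zero_mul]

lemma algebraMapInv_dX_mul (a : ι) (w : ExteriorAlgebra R (ι → R)) :
    ExteriorAlgebra.algebraMapInv (dX R a * w) = 0 := by
  rw [map_mul, dX, ExteriorAlgebra.algebraMapInv, ExteriorAlgebra.lift_ι_apply,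
    LinearMap.zero_apply, zero_mul]

variable [Fintype ι]

lemma sum_smul_dX (v : ι → R) : ∑ a, v a • dX R a = ExteriorAlgebra.ι R v := by
  simp only [dX, ← map_smul, ← map_sum, ← Pi.single_smul', smul_eq_mul, mul_one,
    Finset.univ_sum_single]

lemma sum_dX_mul_contract {k : ℕ} {w : ExteriorAlgebra R (ι → R)}
    (hw : w ∈ ⋀[R]^k (ι → R)) : ∑ a, dX R a * contract R a w = k • w := by
  induction hw using Submodule.pow_induction_on_left' with
  | algebraMap r =>
    simp [Algebra.algebraMap_eq_smul_one, contract_one]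
  | add x y i _ _ hx hy =>
    simp only [map_add, mul_add, Finset.sum_add_distrib, hx, hy, smul_add]
  | mem_mul _ hv i x _ hx =>
    obtain ⟨v, rfl⟩ := hv
    simp only [contract_ι_mul, mul_sub, dX_mul_ι_mul, sub_neg_eq_add, mul_smul_comm,
      ← smul_mul_assoc, Finset.sum_add_distrib, ← Finset.sum_mul, ← Finset.mul_sum, sum_smul_dX, hx]
    rw [Nat.succ_eq_add_one, succ_nsmul', add_mul]

end ExteriorAlgebra

section Operators

variable {ι R : Type*} [CommRing R]

variable (ι R) in
/-- The constant term of a form, in the variables and in their differentials. -/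
def constTerm : PolyForm ι R →ₗ[R] R :=
  TensorProduct.lid R R ∘ₗ
    TensorProduct.map (lcoeff R 0) (ExteriorAlgebra.algebraMapInv (R := R)).toLinearMap

lemma constTerm_tmul (p : MvPolynomial ι R) (w : ExteriorAlgebra R (ι → R)) :
    constTerm ι R (p ⊗ₜ w) = coeff 0 p * ExteriorAlgebra.algebraMapInv w := by
  simp [constTerm]

lemma constTerm_one : constTerm ι R 1 = 1 := by
  simp [Algebra.TensorProduct.one_def, constTerm_tmul]

variable [Fintype ι]

variable (ι R) in
/-- Contraction with the Euler vector field `∑ a, X a ∂/∂X a`. -/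
def eulerContract : PolyForm ι R →ₗ[R] PolyForm ι R :=
  ∑ a, TensorProduct.map (LinearMap.mulLeft R (X a)) (contract R a)

variable (ι R) in
/-- The number operator of the variables, multiplying a form whose coefficients are homogeneous
polynomials of degree `k` by `k`. -/
def polyDegree : PolyForm ι R →ₗ[R] PolyForm ι R :=
  ∑ a, TensorProduct.map (LinearMap.mulLeft R (X a) ∘ₗ (pderiv a).toLinearMap) LinearMap.id

lemma eulerContract_tmul (p : MvPolynomial ι R) (w : ExteriorAlgebra R (ι → R)) :
    eulerContract ι R (p ⊗ₜ w) = ∑ a, (X a * p) ⊗ₜ[R] contract R a w := by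
  simp [eulerContract, LinearMap.sum_apply]

lemma polyDegree_tmul (p : MvPolynomial ι R) (w : ExteriorAlgebra R (ι → R)) :
    polyDegree ι R (p ⊗ₜ w) = (∑ a, X a * pderiv a p) ⊗ₜ[R] w := by
  simp [polyDegree, LinearMap.sum_apply, sum_tmul]

lemma polyDegree_tmul_of_isHomogeneous {k : ℕ} {p : MvPolynomial ι R} (hp : p.IsHomogeneous k)
    (w : ExteriorAlgebra R (ι → R)) : polyDegree ι R (p ⊗ₜ w) = k • p ⊗ₜ[R] w := by
  rw [polyDegree_tmul, hp.sum_X_mul_pderiv, smul_tmul']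

lemma polyDegree_one : polyDegree ι R 1 = 0 := by
  simp [Algebra.TensorProduct.one_def, polyDegree_tmul]

lemma constTerm_comp_polyDegree : constTerm ι R ∘ₗ polyDegree ι R = 0 := by
  classical
  exact TensorProduct.ext' fun p w ↦ by
    simp [polyDegree_tmul, constTerm_tmul, coeff_sum, coeff_X_mul']

variable [DecidableEq ι]

variable (ι R) in
/-- The exterior derivative. -/
def d : PolyForm ι R →ₗ[R] PolyForm ι R :=
  ∑ a, TensorProduct.map (pderiv a).toLinearMap (LinearMap.mulLeft R (dX R a))

variable (ι R) in
/-- The number operator of the differentials, multiplying a `k`-form by `k`. -/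
def formDegree : PolyForm ι R →ₗ[R] PolyForm ι R :=
  ∑ a, TensorProduct.map LinearMap.id (LinearMap.mulLeft R (dX R a) ∘ₗ contract R a)

lemma d_tmul (p : MvPolynomial ι R) (w : ExteriorAlgebra R (ι → R)) :
    d ι R (p ⊗ₜ w) = ∑ a, pderiv a p ⊗ₜ[R] (dX R a * w) := by
  simp [d, LinearMap.sum_apply]

lemma d_one : d ι R 1 = 0 := by
  simp [Algebra.TensorProduct.one_def, d_tmul]

lemma constTerm_comp_d : constTerm ι R ∘ₗ d ι R = 0 :=
  TensorProduct.ext' fun p w ↦ by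
    simp [d_tmul, constTerm_tmul, algebraMapInv_dX_mul]

lemma formDegree_tmul (p : MvPolynomial ι R) (w : ExteriorAlgebra R (ι → R)) :
    formDegree ι R (p ⊗ₜ w) = p ⊗ₜ[R] ∑ a, dX R a * contract R a w := by
  simp [formDegree, LinearMap.sum_apply, tmul_sum]

lemma formDegree_tmul_of_mem (p : MvPolynomial ι R) {k : ℕ} {w : ExteriorAlgebra R (ι → R)}
    (hw : w ∈ ⋀[R]^k (ι → R)) : formDegree ι R (p ⊗ₜ w) = k • p ⊗ₜ[R] w := by
  rw [formDegree_tmul, sum_dX_mul_contract hw, tmul_smul]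

lemma d_eulerContract_add_eulerContract_d :
    d ι R ∘ₗ eulerContract ι R + eulerContract ι R ∘ₗ d ι R =
      formDegree ι R + polyDegree ι R := by
  refine TensorProduct.ext' fun p w ↦ ?_
  have summand_eq (a b : ι) :
      pderiv b (X a * p) ⊗ₜ[R] (dX R b * contract R a w) +
          (X a * pderiv b p) ⊗ₜ[R] contract R a (dX R b * w) =
        if b = a then p ⊗ₜ[R] (dX R a * contract R a w) + (X a * pderiv a p) ⊗ₜ[R] w else 0 := by
    rw [pderiv_mul, pderiv_X, Pi.single_apply, contract_dX_mul]
    split_ifs with h₁ h₂ h₂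
    · subst h₁
      simp only [one_mul, add_tmul, tmul_sub]
      abel
    · exact absurd h₁.symm h₂
    · exact absurd h₂.symm h₁
    · rw [zero_mul, zero_add, zero_sub, tmul_neg, add_neg_cancel]
  simp only [LinearMap.add_apply, LinearMap.comp_apply, d_tmul, eulerContract_tmul,
    formDegree_tmul, polyDegree_tmul, map_sum, tmul_sum, sum_tmul]
  rw [Finset.sum_comm (f := fun b a ↦ (X a * pderiv b p) ⊗ₜ[R] contract R a (dX R b * w))]
  simp only [← Finset.sum_add_distrib, summand_eq, Finset.sum_ite_eq', Finset.mem_univ, if_true]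

lemma d_comp_d : d ι R ∘ₗ d ι R = 0 := by
  refine TensorProduct.ext' fun p w ↦ ?_
  simp only [LinearMap.comp_apply, d_tmul, map_sum, LinearMap.zero_apply]
  rw [← Fintype.sum_prod_type']
  refine Finset.sum_ninvolution Prod.swap (fun ⟨a, b⟩ ↦ ?_) (fun ⟨a, b⟩ ↦ mt fun h ↦ ?_)
    (fun _ ↦ Finset.mem_univ _) Prod.swap_swap
  · rw [Prod.swap_prod_mk, pderiv_pderiv_comm a b, ← tmul_add]
    rw [show dX R a * (dX R b * w) = _ from dX_mul_ι_mul a _ w]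
    simp [dX]
  · obtain rfl : b = a := congrArg Prod.fst h
    simp only [dX_mul_dX_mul_self, tmul_zero]

end Operators

section Coefficients

variable (ι R V : Type*) [CommRing R] [AddCommGroup V] [Module R V]

/-- The constant term of a form with coefficients in `V`. -/
def constTermV : PolyForm ι R ⊗[R] V →ₗ[R] V :=
  TensorProduct.lid R V ∘ₗ (constTerm ι R).rTensor V

variable {ι R V}

lemma constTermV_one_tmul (v : V) : constTermV ι R V (1 ⊗ₜ v) = v := by
  simp [constTermV, constTerm_one]

variable [Fintype ι]

lemma constTermV_polyDegree (c : PolyForm ι R ⊗[R] V) :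
    constTermV ι R V ((polyDegree ι R).rTensor V c) = 0 := by
  rw [constTermV, LinearMap.comp_apply, ← LinearMap.rTensor_comp_apply, constTerm_comp_polyDegree,
    LinearMap.rTensor_zero, LinearMap.zero_apply, map_zero]

variable [DecidableEq ι]

lemma constTermV_d (c : PolyForm ι R ⊗[R] V) :
    constTermV ι R V ((d ι R).rTensor V c) = 0 := by
  rw [constTermV, LinearMap.comp_apply, ← LinearMap.rTensor_comp_apply, constTerm_comp_d,
    LinearMap.rTensor_zero, LinearMap.zero_apply, map_zero]

variable (ι R V) in
/-- The closed forms with coefficients in `V` whose coefficient polynomials are homogeneous of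
degree `i`, i.e. the cocycles of cohomological degree `-i`. -/
def cocycles (i : ℕ) : Submodule R (PolyForm ι R ⊗[R] V) :=
  LinearMap.ker ((d ι R).rTensor V) ⊓
    LinearMap.eqLocus ((polyDegree ι R).rTensor V) ((i : R) • LinearMap.id)

lemma mem_cocycles {i : ℕ} {c : PolyForm ι R ⊗[R] V} :
    c ∈ cocycles ι R V i ↔
      (d ι R).rTensor V c = 0 ∧ (polyDegree ι R).rTensor V c = (i : R) • c :=
  Iff.rfl

lemma one_tmul_mem_cocycles (v : V) : 1 ⊗ₜ v ∈ cocycles ι R V 0 := by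
  simp [mem_cocycles, d_one, polyDegree_one]

end Coefficients

section PoincareLemma

variable {ι F V : Type*} [Fintype ι] [DecidableEq ι] [Field F] [CharZero F] [AddCommGroup V]
  [Module F V]

variable (ι F V) in
lemma range_one_tmul_sup_iSup_eigenspace :
    LinearMap.range (TensorProduct.mk F (PolyForm ι F) V 1) ⊔
      ⨆ (μ : F) (_ : μ ≠ 0), Module.End.eigenspace (R := F) (M := PolyForm ι F ⊗[F] V)
        ((formDegree ι F + polyDegree ι F).rTensor V) μ = ⊤ := by
  set S := LinearMap.range (TensorProduct.mk F (PolyForm ι F) V 1) ⊔ _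
  have homogeneous_mem (s : ι →₀ ℕ) (r : F) {k : ℕ} {w : ExteriorAlgebra F (ι → F)}
      (hw : w ∈ ⋀[F]^k (ι → F)) (v : V) : (monomial s r ⊗ₜ[F] w) ⊗ₜ[F] v ∈ S := by
    by_cases h : k + s.degree = 0
    · obtain ⟨rfl, hs⟩ := Nat.add_eq_zero_iff.mp h
      obtain rfl := (Finsupp.degree_eq_zero_iff s).mp hs
      obtain ⟨t, rfl⟩ := Submodule.mem_one.mp (by simpa using hw)
      refine Submodule.mem_sup_left ⟨(r * t) • v, ?_⟩
      simp [Algebra.TensorProduct.one_def, Algebra.algebraMap_eq_smul_one, monomial_zero',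
        C_eq_smul_one, smul_tmul', mul_comm, smul_smul]
    · refine Submodule.mem_sup_right <| Submodule.mem_iSup_of_mem ((k + s.degree : ℕ) : F) <|
        Submodule.mem_iSup_of_mem (Nat.cast_ne_zero.mpr h) ?_
      rw [Module.End.mem_eigenspace_iff, LinearMap.rTensor_tmul, LinearMap.add_apply,
        formDegree_tmul_of_mem _ hw,
        polyDegree_tmul_of_isHomogeneous (isHomogeneous_monomial r rfl), ← add_smul,
        Nat.cast_smul_eq_nsmul, ← smul_tmul']
  rw [eq_top_iff, ← TensorProduct.span_tmul_eq_top, Submodule.span_le]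
  rintro _ ⟨c, v, rfl⟩
  induction c using homogeneous_induction with
  | tmul s r k w hw => exact homogeneous_mem s r hw v
  | add b c hb hc =>
    rw [add_tmul]
    exact S.add_mem hb hc

lemma range_d_eq_ker_d_inf_ker_constTermV :
    LinearMap.range ((d ι F).rTensor V) =
      LinearMap.ker ((d ι F).rTensor V) ⊓ LinearMap.ker (constTermV ι F V) := by
  set e : Module.End F (PolyForm ι F ⊗[F] V) := (d ι F).rTensor V
  have he : e * e = 0 := by
    rw [Module.End.mul_eq_comp, ← LinearMap.rTensor_comp, d_comp_d, LinearMap.rTensor_zero]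
  have cartan : e * (eulerContract ι F).rTensor V + (eulerContract ι F).rTensor V * e =
      (formDegree ι F + polyDegree ι F).rTensor V := by
    rw [Module.End.mul_eq_comp, Module.End.mul_eq_comp, ← LinearMap.rTensor_comp,
      ← LinearMap.rTensor_comp, ← LinearMap.rTensor_add, d_eulerContract_add_eulerContract_d]
  apply le_antisymm
  · rintro _ ⟨c, rfl⟩
    exact ⟨LinearMap.congr_fun he c, constTermV_d c⟩
  · rintro c ⟨hc, hc₀⟩
    obtain ⟨_, ⟨v, rfl⟩, u, hu, rfl⟩ := Submodule.mem_sup.mp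
      (range_one_tmul_sup_iSup_eigenspace ι F V ▸ Submodule.mem_top (x := c))
    have u_closed : e u = 0 := by
      simpa [e, d_one] using hc
    obtain ⟨b, rfl⟩ := ker_inf_iSup_eigenspace_le_range he cartan ⟨u_closed, hu⟩
    have v_eq_zero : v = 0 := by
      simpa [e, constTermV_d, constTermV_one_tmul] using hc₀
    refine ⟨b, ?_⟩
    rw [v_eq_zero, map_zero, zero_add]

lemma cocycles_le_range_d {i : ℕ} (hi : 0 < i) :
    cocycles ι F V i ≤ LinearMap.range ((d ι F).rTensor V) := by
  intro c hc
  rw [mem_cocycles] at hc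
  have constTerm_eq_zero : constTermV ι F V c = 0 := by
    have h := constTermV_polyDegree c
    rw [hc.2, map_smul] at h
    exact (smul_eq_zero.mp h).resolve_left (Nat.cast_ne_zero.mpr hi.ne')
  rw [range_d_eq_ker_d_inf_ker_constTermV]
  exact ⟨hc.1, constTerm_eq_zero⟩

end PoincareLemma

end PolyForm

open PolyForm in
theorem mixed_u_cohomology_kac_module_dualFock_general (ι F V : Type*) [Fintype ι] [DecidableEq ι]
    [Field F] [CharZero F] [AddCommGroup V] [Module F V] :
    d ι F ∘ₗ eulerContract ι F + eulerContract ι F ∘ₗ d ι F = formDegree ι F + polyDegree ι F ∧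
    (∃ φ : ↥(cocycles ι F V 0) →ₗ[F] V, Function.Surjective φ ∧
      LinearMap.ker φ =
        (LinearMap.range ((d ι F).rTensor V)).comap (cocycles ι F V 0).subtype) ∧
    (∀ i : ℕ, 0 < i → cocycles ι F V i ≤ LinearMap.range ((d ι F).rTensor V)) := by
  refine ⟨d_eulerContract_add_eulerContract_d,
    ⟨constTermV ι F V ∘ₗ (cocycles ι F V 0).subtype, fun v ↦ ?_, ?_⟩,
    fun i hi ↦ cocycles_le_range_d hi⟩
  · exact ⟨⟨1 ⊗ₜ v, one_tmul_mem_cocycles v⟩, constTermV_one_tmul v⟩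
  · ext ⟨c, hc⟩
    simp [range_d_eq_ker_d_inf_ker_constTermV, (mem_cocycles.mp hc).1]

lemma deltaY_eq :
    deltaY m n K0 = (-1 : ℂ) • (PolyForm.d (Fin m × Fin n) ℂ).rTensor K0 := by
  rw [← LinearMap.rTensor_smul]
  exact congrArg (LinearMap.rTensor K0) (LinearMap.ext fun x ↦ (neg_one_smul ℂ (opEY m n x)).symm)

lemma range_deltaY :
    LinearMap.range (deltaY m n K0) =
      LinearMap.range ((PolyForm.d (Fin m × Fin n) ℂ).rTensor K0) := by
  rw [deltaY_eq, LinearMap.range_smul _ _ (neg_ne_zero.mpr one_ne_zero)]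

lemma cocyclesY_eq : cocyclesY m n K0 = PolyForm.cocycles (Fin m × Fin n) ℂ K0 := by
  ext i c
  rw [cocyclesY, deltaY_eq, LinearMap.ker_smul _ _ (neg_ne_zero.mpr one_ne_zero)]
  rfl

/-- Mixed `u`-cohomology of the Kac module on the dual Fock space (Section 4.3.2 of the
paper).  The operators `e, f, h₁, h₂` satisfy the `gl(1|1)` relation `ef + fe = h₁ + h₂`,
and the cohomology of `δ = -e ⊗ id` is `H⁰_{Πu*}(u,K) ≅ K̄⁰_λ` (represented by `K0`) in
degree `0`, and `H^{-i}_{Πu*}(u,K) = 0` for all `i > 0` (every cocycle of `y`-degree `i > 0`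
is a coboundary). -/
theorem mixed_u_cohomology_kac_module_dualFock :
    opEY m n ∘ₗ opFY m n + opFY m n ∘ₗ opEY m n = opH1Y m n + opH2Y m n ∧
    -- `H⁰ ≅ K̄⁰_λ`: there is a surjection from the degree-0 cocycles onto `K0` whose
    -- kernel is exactly the space of coboundaries, i.e. `Z⁰/B⁰ ≅ K0`:
    (∃ φ : ↥(cocyclesY m n K0 0) →ₗ[ℂ] K0, Function.Surjective φ ∧
      LinearMap.ker φ =
        (LinearMap.range (deltaY m n K0)).comap (cocyclesY m n K0 0).subtype) ∧
    (∀ i : ℕ, 0 < i → cocyclesY m n K0 i ≤ LinearMap.range (deltaY m n K0)) := by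
  rw [range_deltaY, cocyclesY_eq]
  exact mixed_u_cohomology_kac_module_dualFock_general (Fin m × Fin n) ℂ K0
end
end
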